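/- arXiv:2002.07735 — 2 statements merged into one kernel-verified Lean document; each statement's English description precedes it below -/
import Mathlib

section
/- For every h < h**(d) there exist constants C₁ = C₁(d) > 0 and c = c(d,h) > 0 such that for every integer L ≥ 1 and all x, y ∈ B_L: P[{x} ↔ {y} in {φ^L ≥ h} ∩ B_{2L}] ≥ c L^{−C₁}. -/
open MeasureTheory ProbabilityTheory Filter Set

namespace GFFperc

noncomputable section

/-- The lattice `ℤ^d`. -/
abbrev V (d : ℕ) := Fin d → ℤ

/-- Nearest-neighbour adjacency on `ℤ^d`. -/
def adj {d : ℕ} (x y : V d) : Prop := (∑ i, (x i - y i).natAbs) = 1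

/-- `ℓ∞` distance between two points. -/
def dinf {d : ℕ} (x y : V d) : ℕ := Finset.univ.sup fun i => (x i - y i).natAbs

/-- `A` and `B` are joined by a nearest-neighbour path contained in `S`. -/
def ConnIn {d : ℕ} (S A B : Set (V d)) : Prop :=
  ∃ (n : ℕ) (γ : ℕ → V d), γ 0 ∈ A ∧ γ n ∈ B ∧ (∀ k, k ≤ n → γ k ∈ S) ∧
    ∀ k, k < n → adj (γ k) (γ (k + 1))

/-- A set is connected: any two of its points are joined inside it. -/
def IsConnSet {d : ℕ} (S : Set (V d)) : Prop := ∀ x ∈ S, ∀ y ∈ S, ConnIn S {x} {y}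

/-- The connected component of `x` in `S`. -/
def comp {d : ℕ} (S : Set (V d)) (x : V d) : Set (V d) := {y | ConnIn S {x} {y}}

/-- Box of (real) radius `r` centered at `x`. -/
def boxAt {d : ℕ} (x : V d) (r : ℝ) : Set (V d) := {y | ∀ i, |(y i : ℝ) - (x i : ℝ)| ≤ r}

def box (d : ℕ) (r : ℝ) : Set (V d) := boxAt (0 : V d) r

/-- Inner vertex boundary of the box of radius `r` centered at `x`. -/
def bdryAt {d : ℕ} (x : V d) (r : ℝ) : Set (V d) :=
  {y | y ∈ boxAt x r ∧ ∃ z, z ∉ boxAt x r ∧ adj y z}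

def bdry (d : ℕ) (r : ℝ) : Set (V d) := bdryAt (0 : V d) r

/-- `A` is connected to infinity within `S`. -/
def ConnToInf {d : ℕ} (S A : Set (V d)) : Prop := ∀ R : ℕ, 1 ≤ R → ConnIn S A (bdry d R)

/-- The `ℓ∞`-diameter of `S` is at least `r`. -/
def diamGE {d : ℕ} (S : Set (V d)) (r : ℝ) : Prop := ∃ x ∈ S, ∃ y ∈ S, r ≤ (dinf x y : ℝ)

def unitV (d : ℕ) (i : Fin d) : V d := fun j => if j = i then 1 else 0

/-- `k`-step transition probabilities of simple random walk on `ℤ^d`. -/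
def srwP (d : ℕ) : ℕ → V d → V d → ℝ
  | 0, x, y => if x = y then 1 else 0
  | (k + 1), x, y =>
      (1 / (2 * d)) * ∑ i : Fin d, (srwP d k (x + unitV d i) y + srwP d k (x - unitV d i) y)

/-- Green function of simple random walk on `ℤ^d`. -/
def green (d : ℕ) (x y : V d) : ℝ := ∑' k : ℕ, srwP d k x y

/-- `ℓ`-step transition kernel of the lazy simple random walk on `ℤ^d`. -/
def lazyP (d : ℕ) : ℕ → V d → V d → ℝ
  | 0, x, y => if x = y then 1 else 0
  | (k + 1), x, y =>
      (1 / 2) * lazyP d k x y +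
        (1 / (4 * d)) * ∑ i : Fin d, (lazyP d k (x + unitV d i) y + lazyP d k (x - unitV d i) y)

/-- `φ` is a centered Gaussian field with covariance function `C`: every finite linear
combination is a centered Gaussian variable with the corresponding variance. -/
def IsCGF {Ω : Type*} [MeasurableSpace Ω] {d : ℕ} (P : Measure Ω)
    (φ : V d → Ω → ℝ) (C : V d → V d → ℝ) : Prop :=
  (∀ x, Measurable (φ x)) ∧
    ∀ (s : Finset (V d)) (a : V d → ℝ),
      Measure.map (fun ω => ∑ x ∈ s, a x * φ x ω) P =
        gaussianReal 0 (Real.toNNReal (∑ x ∈ s, ∑ y ∈ s, a x * a y * C x y))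

/-- `φ` is a Gaussian free field on `ℤ^d`. -/
def IsGFF {Ω : Type*} [MeasurableSpace Ω] {d : ℕ} (P : Measure Ω) (φ : V d → Ω → ℝ) : Prop :=
  IsCGF P φ (green d)

/-- The level set `{φ ≥ h}`. -/
def lvl {d : ℕ} {Ω : Type*} (φ : V d → Ω → ℝ) (h : ℝ) (ω : Ω) : Set (V d) := {x | h ≤ φ x ω}

/-- The whole field, as one random variable with values in `V d → ℝ`. -/
def proc {Ω : Type*} {d : ℕ} (φ : V d → Ω → ℝ) : Ω → V d → ℝ := fun ω x => φ x ω

/-- The critical parameter `h_*`. -/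
def hStar (d : ℕ) {Ω : Type*} [MeasurableSpace Ω] (P : Measure Ω) (φ : V d → Ω → ℝ) : ℝ :=
  sInf {h : ℝ | P {ω | ConnToInf (lvl φ h ω) {(0 : V d)}} = 0}

/-- The critical parameter `h_{**}`. -/
def hStarStar (d : ℕ) {Ω : Type*} [MeasurableSpace Ω] (P : Measure Ω) (φ : V d → Ω → ℝ) : ℝ :=
  sInf {h : ℝ |
    (⨅ R : ℕ, P {ω | ConnIn (lvl φ h ω) (box d ((R : ℝ) + 1)) (bdry d (2 * ((R : ℝ) + 1)))}) = 0}

/-- `u(R) = exp((log R)^{1/3})`. -/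
def ufn (R : ℝ) : ℝ := Real.exp (Real.log R ^ ((1 : ℝ) / 3))

def tildeSet (d : ℕ) {Ω : Type*} [MeasurableSpace Ω] (P : Measure Ω) (φ : V d → Ω → ℝ) :
    Set ℝ :=
  {h : ℝ |
    (⨅ R : ℕ, ENNReal.ofReal (((R : ℝ) + 1) ^ d) *
        P {ω | ¬ ConnIn (lvl φ h ω) (box d (ufn ((R : ℝ) + 1))) (bdry d ((R : ℝ) + 1))}) = 0}

/-- The critical parameter `h̃`. -/
def hTilde (d : ℕ) {Ω : Type*} [MeasurableSpace Ω] (P : Measure Ω) (φ : V d → Ω → ℝ) : ℝ :=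
  sSup (tildeSet d P φ)

/-- The event `Exist(R,α)`. -/
def ExistEv (d : ℕ) {Ω : Type*} (φ : V d → Ω → ℝ) (R : ℕ) (α : ℝ) : Set Ω :=
  {ω | ∃ x ∈ lvl φ α ω ∩ box d (R : ℝ),
    diamGE (comp (lvl φ α ω ∩ box d (R : ℝ)) x) ((R : ℝ) / 5)}

/-- The event `Unique(R,α)`. -/
def UniqueEv (d : ℕ) {Ω : Type*} (φ : V d → Ω → ℝ) (R : ℕ) (α : ℝ) : Set Ω :=
  {ω | ∀ x ∈ lvl φ α ω ∩ box d (R : ℝ), ∀ y ∈ lvl φ α ω ∩ box d (R : ℝ),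
    diamGE (comp (lvl φ α ω ∩ box d (R : ℝ)) x) ((R : ℝ) / 10) →
    diamGE (comp (lvl φ α ω ∩ box d (R : ℝ)) y) ((R : ℝ) / 10) →
    ConnIn (lvl φ α ω ∩ box d (2 * (R : ℝ))) {x} {y}}

/-- `φ` strongly percolates up to level `h`. -/
def StronglyPerc (d : ℕ) {Ω : Type*} [MeasurableSpace Ω] (P : Measure Ω)
    (φ : V d → Ω → ℝ) (h : ℝ) : Prop :=
  ∃ c : ℝ, 0 < c ∧ ∃ ρ : ℝ, ρ ∈ Set.Ioc (0 : ℝ) 1 ∧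
    ∀ α : ℝ, α ≤ h → ∀ R : ℕ, 1 ≤ R →
      ENNReal.ofReal (1 - Real.exp (-c * (R : ℝ) ^ ρ)) ≤ P (ExistEv d φ R α) ∧
      ENNReal.ofReal (1 - Real.exp (-c * (R : ℝ) ^ ρ)) ≤ P (UniqueEv d φ R α)

/-- The critical parameter `h̄`. -/
def hBar (d : ℕ) {Ω : Type*} [MeasurableSpace Ω] (P : Measure Ω) (φ : V d → Ω → ℝ) : ℝ :=
  sSup {h : ℝ | StronglyPerc d P φ h}


/-- Covariance of the truncated field `φ^L`. -/
def covTrunc (d L : ℕ) (x y : V d) : ℝ := (1 / 2) * ∑ ℓ ∈ Finset.range (L + 1), lazyP d ℓ x y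

/-- Covariance of the tail field `φ - φ^L`. -/
def covTail (d L : ℕ) (x y : V d) : ℝ := (1 / 2) * ∑' ℓ : ℕ, lazyP d (ℓ + L + 1) x y

/-- The truncated fields `φ^L` are coupled with `φ` so that, for each `L`, `φ^L` and
`φ - φ^L` are independent centered Gaussian fields with the stated covariances. -/
def IsTruncCoupling (d : ℕ) {Ω : Type*} [MeasurableSpace Ω] (P : Measure Ω)
    (φ : V d → Ω → ℝ) (φL : ℕ → V d → Ω → ℝ) : Prop :=
  ∀ L : ℕ, IsCGF P (φL L) (covTrunc d L) ∧
    IsCGF P (fun x ω => φ x ω - φL L x ω) (covTail d L) ∧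
    IndepFun (proc (φL L)) (proc fun x ω => φ x ω - φL L x ω) P

/-- Box with integer radius `r` centered at `x`. -/
def boxI {d : ℕ} (x : V d) (r : ℕ) : Set (V d) := {y | ∀ i, (y i - x i).natAbs ≤ r}

/-!
Fix `h < h' < h**`. Annulus crossings at level `h'` have probability at least some `c₀ > 0`; as the
tail `φ - φ^L` has variance `O(L ^ (-1/4))`, it stays below `h' - h` on `B_{2L}` up to
probability `c₀ / 2`, so the crossings survive for `φ^L` at level `h`. A union bound over endpoints
turns a crossing of scale `R ≤ L` into two fixed sites `z`, `w` at distance `R` in some coordinate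
direction, connected inside `z + B_R` with probability at least `c L ^ (-2d)`. Lattice symmetries
move such arms around, and the FKG inequality, which holds because the covariance of `φ^L` is
completely positive, glues at most `3d + 1` of them into a connection from `x` to `y`.

For `h**` to be a genuine infimum, crossings at a very negative level must not be too unlikely:
explore the clusters of `∂B_{2R}` in `{φ ≥ -1}`. In the unexplored region the conditional mean of
`φ` is harmonic with boundary values below `-1`, so `φ 0` has mean at most `-1` on the event that
`0` is not reached; as `φ 0` is centred, that event cannot have probability close to `1`.
-/

/-! ### The lazy walk and the symmetries of the lattice -/

section LazyWalk

variable {d : ℕ}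

/-- The nearest-neighbour average `(2d)⁻¹ ∑_{z ∼ x} f z`, i.e. one step of simple random walk. -/
def nnAvg (f : V d → ℝ) (x : V d) : ℝ :=
  (1 / (2 * d)) * ∑ i : Fin d, (f (x + unitV d i) + f (x - unitV d i))

/-- One step of the lazy walk, acting on functions; written so that it unfolds the recursion that
defines `lazyP`. -/
def lazyAvg (f : V d → ℝ) (x : V d) : ℝ :=
  (1 / 2) * f x + (1 / (4 * d)) * ∑ i : Fin d, (f (x + unitV d i) + f (x - unitV d i))

/-- The lattice isometry `x ↦ (sᵢ x_{τ i} + aᵢ)ᵢ`. -/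
def latticeIso (τ : Equiv.Perm (Fin d)) (s : Fin d → ℤˣ) (a x : V d) : V d :=
  fun i => s i * x (τ i) + a i

lemma latticeIso_injective (τ : Equiv.Perm (Fin d)) (s : Fin d → ℤˣ) (a : V d) :
    Function.Injective (latticeIso τ s a) := by
  intro x y hxy
  funext j
  have hj := congrFun hxy (τ.symm j)
  simpa only [latticeIso, Equiv.apply_symm_apply, add_left_inj, Units.mul_right_inj] using hj

lemma latticeIso_add_unitV (τ : Equiv.Perm (Fin d)) (s : Fin d → ℤˣ) (a x : V d) (i : Fin d) :
    latticeIso τ s a (x + unitV d (τ i)) = latticeIso τ s a x + (s i : ℤ) • unitV d i := by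
  funext j
  by_cases hj : j = i <;> simp [latticeIso, unitV, hj]
  ring

lemma latticeIso_sub_unitV (τ : Equiv.Perm (Fin d)) (s : Fin d → ℤˣ) (a x : V d) (i : Fin d) :
    latticeIso τ s a (x - unitV d (τ i)) = latticeIso τ s a x - (s i : ℤ) • unitV d i := by
  funext j
  by_cases hj : j = i <;> simp [latticeIso, unitV, hj]
  ring

lemma lazyAvg_comp_latticeIso (τ : Equiv.Perm (Fin d)) (s : Fin d → ℤˣ) (a : V d) (f : V d → ℝ)
    (x : V d) : lazyAvg (fun z => f (latticeIso τ s a z)) x = lazyAvg f (latticeIso τ s a x) := by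
  unfold lazyAvg
  congr 2
  rw [← Equiv.sum_comp τ]
  refine Finset.sum_congr rfl fun i _ => ?_
  simp only [latticeIso_add_unitV, latticeIso_sub_unitV]
  rcases Int.units_eq_one_or (s i) with hs | hs <;> simp [hs, sub_eq_add_neg, add_comm]

lemma lazyAvg_nonneg {f : V d → ℝ} (hf : ∀ x, 0 ≤ f x) (x : V d) : 0 ≤ lazyAvg f x :=
  add_nonneg (mul_nonneg (by norm_num) (hf x)) (mul_nonneg (by positivity)
    (Finset.sum_nonneg fun _ _ => add_nonneg (hf _) (hf _)))

lemma lazyAvg_eq_half_add_half_nnAvg (f : V d → ℝ) (x : V d) :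
    lazyAvg f x = (1 / 2) * f x + (1 / 2) * nnAvg f x := by
  rw [lazyAvg, nnAvg, ← mul_assoc, one_div_mul_one_div, ← mul_assoc]
  norm_num

lemma nnAvg_const_mul (c : ℝ) (f : V d → ℝ) (x : V d) :
    nnAvg (fun z => c * f z) x = c * nnAvg f x := by
  simp only [nnAvg, ← mul_add, ← Finset.mul_sum]
  ring

lemma lazyAvg_const_mul (c : ℝ) (f : V d → ℝ) (x : V d) :
    lazyAvg (fun z => c * f z) x = c * lazyAvg f x := by
  simp only [lazyAvg_eq_half_add_half_nnAvg, nnAvg_const_mul]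
  ring

lemma lazyAvg_sum {ι : Type*} (t : Finset ι) (f : ι → V d → ℝ) (x : V d) :
    lazyAvg (fun z => ∑ j ∈ t, f j z) x = ∑ j ∈ t, lazyAvg (f j) x := by
  simp only [lazyAvg, Finset.sum_add_distrib, Finset.mul_sum, mul_add]
  rw [Finset.sum_comm, Finset.sum_comm (s := Finset.univ)]

lemma lazyAvg_integral {α : Type*} [MeasurableSpace α] {μ : Measure α} {F : V d → α → ℝ}
    (hF : ∀ z, Integrable (F z) μ) (x : V d) :
    lazyAvg (fun z => ∫ a, F z a ∂μ) x = ∫ a, lazyAvg (fun z => F z a) x ∂μ := by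
  have hpair : ∀ i ∈ (Finset.univ : Finset (Fin d)),
      Integrable (fun a => F (x + unitV d i) a + F (x - unitV d i) a) μ :=
    fun i _ => (hF _).add (hF _)
  simp only [lazyAvg]
  rw [integral_add ((hF x).const_mul _) ((integrable_finsetSum _ hpair).const_mul _),
    integral_const_mul, integral_const_mul, integral_finsetSum _ hpair]
  simp only [integral_add (hF _) (hF _)]

lemma hasSum_lazyAvg {F : ℕ → V d → ℝ} (hF : ∀ z, Summable fun k => F k z) (x : V d) :
    HasSum (fun k => lazyAvg (F k) x) (lazyAvg (fun z => ∑' k, F k z) x) :=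
  ((hF x).hasSum.mul_left _).add
    ((hasSum_sum fun _ _ => (hF _).hasSum.add (hF _).hasSum).mul_left _)

lemma lazyP_succ_eq_lazyAvg (k : ℕ) (x y : V d) :
    lazyP d (k + 1) x y = lazyAvg (fun z => lazyP d k z y) x := rfl

lemma lazyP_latticeIso (τ : Equiv.Perm (Fin d)) (s : Fin d → ℤˣ) (a : V d) (k : ℕ) (x y : V d) :
    lazyP d k (latticeIso τ s a x) (latticeIso τ s a y) = lazyP d k x y := by
  induction k generalizing x with
  | zero => simp only [lazyP, (latticeIso_injective τ s a).eq_iff]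
  | succ k ih => simp only [lazyP_succ_eq_lazyAvg, ← lazyAvg_comp_latticeIso, ih]

lemma lazyP_symm (k : ℕ) (x y : V d) : lazyP d k x y = lazyP d k y x := by
  rw [← lazyP_latticeIso (Equiv.refl _) (fun _ => -1) (x + y) k x y]
  congr 1 <;> funext i <;> simp [latticeIso]

lemma lazyP_nonneg (k : ℕ) (x y : V d) : 0 ≤ lazyP d k x y := by
  induction k generalizing x with
  | zero => simp only [lazyP]; split_ifs <;> norm_num
  | succ k ih => exact lazyAvg_nonneg ih x

lemma lazyP_add_two (k : ℕ) (x y : V d) :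
    lazyP d (k + 2) x y = lazyAvg (fun z => lazyAvg (fun w => lazyP d k z w) y) x := by
  simp_rw [lazyP_succ_eq_lazyAvg (k + 1), lazyP_symm (k + 1) _ y, lazyP_succ_eq_lazyAvg k,
    lazyP_symm k]

lemma adj_latticeIso (τ : Equiv.Perm (Fin d)) (s : Fin d → ℤˣ) (a : V d) {x y : V d}
    (hxy : adj x y) : adj (latticeIso τ s a x) (latticeIso τ s a y) := by
  unfold adj at *
  rw [← hxy, ← Equiv.sum_comp τ (fun i => (x i - y i).natAbs)]
  refine Finset.sum_congr rfl fun i _ => ?_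
  rcases Int.units_eq_one_or (s i) with hs | hs <;> simp only [latticeIso, hs] <;> push_cast <;>
    omega

lemma covTrunc_latticeIso (L : ℕ) (τ : Equiv.Perm (Fin d)) (s : Fin d → ℤˣ) (a x y : V d) :
    covTrunc d L (latticeIso τ s a x) (latticeIso τ s a y) = covTrunc d L x y := by
  simp only [covTrunc, lazyP_latticeIso]

lemma covTrunc_self_pos (L : ℕ) (x : V d) : 0 < covTrunc d L x x := by
  have hsteps : 0 ≤ ∑ k ∈ Finset.range L, lazyP d (k + 1) x x :=
    Finset.sum_nonneg fun k _ => lazyP_nonneg _ _ _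
  have hstart : lazyP d 0 x x = 1 := if_pos rfl
  rw [covTrunc, Finset.sum_range_succ', hstart]
  positivity

end LazyWalk

/-! ### Fourier inversion and the heat-kernel bound -/

section HeatKernel

variable {d : ℕ}

/-- Lebesgue measure on the torus, realised as `(-π, π]^d`. -/
def torusMeasure (d : ℕ) : Measure (Fin d → ℝ) :=
  Measure.pi fun _ => volume.restrict (Set.Ioc (-Real.pi) Real.pi)

instance : IsFiniteMeasure (torusMeasure d) := by
  unfold torusMeasure
  infer_instance

/-- The characteristic function of one step of the lazy walk. -/
def lazySymbol (θ : Fin d → ℝ) : ℝ := 1 / 2 + (1 / (2 * d)) * ∑ i, Real.cos (θ i)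

/-- The phase `n · θ` of the character of `ℤ^d` with frequency `θ`. -/
def phase (n : V d) (θ : Fin d → ℝ) : ℝ := ∑ i, (n i : ℝ) * θ i

lemma phase_add (m n : V d) (θ : Fin d → ℝ) : phase (m + n) θ = phase m θ + phase n θ := by
  simp only [phase, Pi.add_apply, Int.cast_add, add_mul, Finset.sum_add_distrib]

lemma phase_sub (m n : V d) (θ : Fin d → ℝ) : phase (m - n) θ = phase m θ - phase n θ := by
  simp only [phase, Pi.sub_apply, Int.cast_sub, sub_mul, Finset.sum_sub_distrib]

lemma phase_unitV (i : Fin d) (θ : Fin d → ℝ) : phase (unitV d i) θ = θ i := by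
  simp [phase, unitV]

@[fun_prop]
lemma continuous_phase (n : V d) : Continuous (phase n) := by
  unfold phase
  fun_prop

@[fun_prop]
lemma continuous_lazySymbol : Continuous (lazySymbol (d := d)) := by
  unfold lazySymbol
  fun_prop

lemma lazySymbol_eq_one_sub (hd : 0 < d) (θ : Fin d → ℝ) :
    lazySymbol θ = 1 - (1 / (2 * d)) * ∑ i, (1 - Real.cos (θ i)) := by
  have hd0 : (d : ℝ) ≠ 0 := by positivity
  simp only [lazySymbol, Finset.sum_sub_distrib, Finset.sum_const, Finset.card_univ,
    Fintype.card_fin, nsmul_eq_mul]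
  field_simp
  ring

lemma lazySymbol_nonneg (hd : 0 < d) (θ : Fin d → ℝ) : 0 ≤ lazySymbol θ := by
  have hcos : ∑ i, (1 - Real.cos (θ i)) ≤ ∑ _i : Fin d, (2 : ℝ) :=
    Finset.sum_le_sum fun i _ => by linarith [Real.neg_one_le_cos (θ i)]
  have hsum : ∑ i, (1 - Real.cos (θ i)) ≤ 2 * d := by simpa [mul_comm] using hcos
  rw [lazySymbol_eq_one_sub hd, sub_nonneg, one_div_mul_eq_div]
  exact (div_le_one (by positivity)).2 hsum

lemma lazySymbol_le_one (hd : 0 < d) (θ : Fin d → ℝ) : lazySymbol θ ≤ 1 := by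
  rw [lazySymbol_eq_one_sub hd, sub_le_self_iff]
  exact mul_nonneg (by positivity)
    (Finset.sum_nonneg fun i _ => sub_nonneg.2 (Real.cos_le_one (θ i)))

lemma setIntegral_exp_I_mul_int (n : ℤ) :
    ∫ t in Set.Ioc (-Real.pi) Real.pi, Complex.exp (Complex.I * (n * t)) =
      if n = 0 then (2 * Real.pi : ℂ) else 0 := by
  rw [← intervalIntegral.integral_of_le (by linarith [Real.pi_pos])]
  split_ifs with hn
  · simp [hn]
    ring
  · have hne : Complex.I * n ≠ 0 := by simp [hn]
    simp_rw [← mul_assoc]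
    rw [integral_exp_mul_complex hne, div_eq_zero_iff, sub_eq_zero,
      Complex.exp_eq_exp_iff_exists_int]
    refine Or.inl ⟨n, ?_⟩
    push_cast
    ring

lemma prod_exp_I_mul_eq (n : V d) (θ : Fin d → ℝ) :
    ∏ i, Complex.exp (Complex.I * (n i * θ i)) = Complex.exp (phase n θ * Complex.I) := by
  rw [← Complex.exp_sum, ← Finset.mul_sum, mul_comm]
  simp only [phase, Complex.ofReal_sum, Complex.ofReal_mul, Complex.ofReal_intCast]

lemma integral_cos_phase (n : V d) :
    ∫ θ, Real.cos (phase n θ) ∂(torusMeasure d) = if n = 0 then (2 * Real.pi) ^ d else 0 := by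
  have hint : Integrable (fun θ => Complex.exp (phase n θ * Complex.I)) (torusMeasure d) :=
    .of_bound (C := 1) (Continuous.aestronglyMeasurable (by fun_prop))
      (ae_of_all _ fun θ => (Complex.norm_exp_ofReal_mul_I _).le)
  have hexp : ∫ θ, Complex.exp (phase n θ * Complex.I) ∂(torusMeasure d) =
      ∏ i, if n i = 0 then (2 * Real.pi : ℂ) else 0 := by
    simp_rw [← prod_exp_I_mul_eq, torusMeasure]
    rw [integral_fintype_prod_eq_prod (𝕜 := ℂ)
      (f := fun i (t : ℝ) => Complex.exp (Complex.I * (n i * t)))]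
    simp only [setIntegral_exp_I_mul_int]
  have hre := integral_re hint
  simp only [RCLike.re_eq_complex_re, Complex.exp_ofReal_mul_I_re] at hre
  rw [hre, hexp]
  split_ifs with hn
  · simp only [hn, Pi.zero_apply, if_true, Finset.prod_const, Finset.card_univ, Fintype.card_fin]
    norm_cast
  · obtain ⟨i, hi⟩ := Function.ne_iff.1 hn
    rw [Finset.prod_eq_zero (Finset.mem_univ i) (if_neg hi), Complex.zero_re]

lemma lazyAvg_cos_phase (y x : V d) (θ : Fin d → ℝ) :
    lazyAvg (fun z => Real.cos (phase (z - y) θ)) x =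
      lazySymbol θ * Real.cos (phase (x - y) θ) := by
  have hpair (i : Fin d) : Real.cos (phase (x + unitV d i - y) θ) +
      Real.cos (phase (x - unitV d i - y) θ) = 2 * Real.cos (phase (x - y) θ) * Real.cos (θ i) := by
    rw [add_sub_right_comm, sub_right_comm, phase_add, phase_sub (x - y), phase_unitV,
      Real.cos_add, Real.cos_sub]
    ring
  simp only [lazyAvg, lazySymbol, hpair, ← Finset.mul_sum]
  ring

lemma integrable_lazySymbol_pow_mul_cos (hd : 0 < d) (k : ℕ) (n : V d) :
    Integrable (fun θ => lazySymbol θ ^ k * Real.cos (phase n θ)) (torusMeasure d) := by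
  refine .of_bound (C := 1) (Continuous.aestronglyMeasurable (by fun_prop))
    (ae_of_all _ fun θ => ?_)
  rw [norm_mul, norm_pow, Real.norm_of_nonneg (lazySymbol_nonneg hd θ)]
  exact mul_le_one₀ (pow_le_one₀ (lazySymbol_nonneg hd θ) (lazySymbol_le_one hd θ)) (norm_nonneg _)
    (Real.abs_cos_le_one _)

lemma lazyP_fourier (hd : 0 < d) (k : ℕ) (x y : V d) :
    (2 * Real.pi) ^ d * lazyP d k x y =
      ∫ θ, lazySymbol θ ^ k * Real.cos (phase (x - y) θ) ∂(torusMeasure d) := by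
  induction k generalizing x with
  | zero =>
    simp only [pow_zero, one_mul, integral_cos_phase, lazyP, sub_eq_zero, mul_ite, mul_one,
      mul_zero]
  | succ k ih =>
    rw [lazyP_succ_eq_lazyAvg, ← lazyAvg_const_mul]
    simp_rw [ih]
    rw [lazyAvg_integral fun z => integrable_lazySymbol_pow_mul_cos hd k (z - y)]
    simp_rw [lazyAvg_const_mul, lazyAvg_cos_phase, pow_succ, mul_assoc]

lemma ae_mem_Ioc_torusMeasure :
    ∀ᵐ θ ∂(torusMeasure d), ∀ i, θ i ∈ Set.Ioc (-Real.pi) Real.pi :=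
  ae_all_iff.2 fun i => (Measure.quasiMeasurePreserving_eval
    (μ := fun _ : Fin d => volume.restrict (Set.Ioc (-Real.pi) Real.pi)) i).ae
      (ae_restrict_mem measurableSet_Ioc)

lemma lazySymbol_le_exp (hd : 0 < d) {θ : Fin d → ℝ}
    (hθ : ∀ i, θ i ∈ Set.Ioc (-Real.pi) Real.pi) :
    lazySymbol θ ≤ Real.exp (-∑ i, 1 / (d * Real.pi ^ 2) * θ i ^ 2) := by
  have hcos (i : Fin d) :
      1 / (d * Real.pi ^ 2) * θ i ^ 2 ≤ 1 / (2 * d) * (1 - Real.cos (θ i)) := by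
    have hquad := Real.cos_le_one_sub_mul_cos_sq (abs_le.2 ⟨(hθ i).1.le, (hθ i).2⟩)
    calc 1 / (d * Real.pi ^ 2) * θ i ^ 2 = 1 / (2 * d) * (2 / Real.pi ^ 2 * θ i ^ 2) := by
          field_simp
      _ ≤ 1 / (2 * d) * (1 - Real.cos (θ i)) := by gcongr; linarith
  rw [lazySymbol_eq_one_sub hd, Finset.mul_sum]
  exact le_trans (by linarith [Finset.sum_le_sum fun i (_ : i ∈ Finset.univ) => hcos i])
    (Real.add_one_le_exp _)

lemma lazySymbol_pow_mul_cos_le (hd : 0 < d) (k : ℕ) (n : V d) {θ : Fin d → ℝ}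
    (hθ : ∀ i, θ i ∈ Set.Ioc (-Real.pi) Real.pi) :
    lazySymbol θ ^ k * Real.cos (phase n θ) ≤
      ∏ i, Real.exp (-(1 / (d * Real.pi ^ 2) * k) * θ i ^ 2) := by
  have hnonneg := lazySymbol_nonneg hd θ
  calc lazySymbol θ ^ k * Real.cos (phase n θ) ≤ lazySymbol θ ^ k :=
        mul_le_of_le_one_right (pow_nonneg hnonneg k) (Real.cos_le_one _)
    _ ≤ Real.exp (-∑ i, 1 / (d * Real.pi ^ 2) * θ i ^ 2) ^ k :=
        pow_le_pow_left₀ hnonneg (lazySymbol_le_exp hd hθ) k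
    _ = _ := by
        rw [← Real.exp_sum, ← Real.exp_nat_mul, ← Finset.sum_neg_distrib, Finset.mul_sum]
        congr 1
        exact Finset.sum_congr rfl fun i _ => by ring

lemma lazyP_le_sqrt_pow (hd : 0 < d) {k : ℕ} (hk : 0 < k) (x y : V d) :
    lazyP d k x y ≤ √(d * Real.pi ^ 3 / k) ^ d := by
  have hpi := Real.pi_gt_three
  set b : ℝ := 1 / (d * Real.pi ^ 2) * k with hb
  have hb0 : 0 < b := by positivity
  have hgauss : ∫ t in Set.Ioc (-Real.pi) Real.pi, Real.exp (-b * t ^ 2) ≤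
      √(d * Real.pi ^ 3 / k) :=
    calc ∫ t in Set.Ioc (-Real.pi) Real.pi, Real.exp (-b * t ^ 2)
        ≤ ∫ t, Real.exp (-b * t ^ 2) := setIntegral_le_integral (integrable_exp_neg_mul_sq hb0)
          (ae_of_all _ fun t => (Real.exp_pos _).le)
      _ = √(d * Real.pi ^ 3 / k) := by
          rw [integral_gaussian, hb]
          congr 1
          field_simp
  have hprod : Integrable (fun θ : Fin d → ℝ => ∏ i, Real.exp (-b * θ i ^ 2)) (torusMeasure d) :=
    Integrable.fintype_prod (f := fun _ (t : ℝ) => Real.exp (-b * t ^ 2))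
      fun _ => (integrable_exp_neg_mul_sq hb0).restrict
  calc lazyP d k x y ≤ (2 * Real.pi) ^ d * lazyP d k x y :=
        le_mul_of_one_le_left (lazyP_nonneg _ _ _) (one_le_pow₀ (by linarith))
    _ = ∫ θ, lazySymbol θ ^ k * Real.cos (phase (x - y) θ) ∂(torusMeasure d) :=
        lazyP_fourier hd k x y
    _ ≤ ∫ θ, ∏ i, Real.exp (-b * θ i ^ 2) ∂(torusMeasure d) :=
        integral_mono_ae (integrable_lazySymbol_pow_mul_cos hd k _) hprod
          (ae_mem_Ioc_torusMeasure.mono fun θ hθ => lazySymbol_pow_mul_cos_le hd k _ hθ)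
    _ = (∫ t in Set.Ioc (-Real.pi) Real.pi, Real.exp (-b * t ^ 2)) ^ d := by
        rw [torusMeasure, integral_fintype_prod_eq_prod (𝕜 := ℝ)
          (f := fun _ (t : ℝ) => Real.exp (-b * t ^ 2)), Finset.prod_const, Finset.card_univ,
          Fintype.card_fin]
    _ ≤ √(d * Real.pi ^ 3 / k) ^ d :=
        pow_le_pow_left₀ (integral_nonneg fun t => (Real.exp_pos _).le) hgauss d

lemma exists_lazyP_le_rpow (hd : 0 < d) : ∃ K : ℝ, 0 < K ∧ ∀ (k : ℕ) (x y : V d), 1 ≤ k →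
    lazyP d k x y ≤ K * (k : ℝ) ^ (-(d / 2 : ℝ)) := by
  refine ⟨√(d * Real.pi ^ 3) ^ d, by positivity, fun k x y hk => ?_⟩
  refine (lazyP_le_sqrt_pow hd hk x y).trans_eq ?_
  rw [Real.sqrt_div (by positivity), div_pow, div_eq_mul_inv, Real.rpow_neg (by positivity),
    Real.sqrt_eq_rpow (k : ℝ), ← Real.rpow_mul_natCast (by positivity), one_div_mul_eq_div]

end HeatKernel

/-! ### The Green function of the lazy walk -/

section Green

variable {d : ℕ}

lemma summable_lazyP (hd : 3 ≤ d) (x y : V d) : Summable fun k => lazyP d k x y := by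
  obtain ⟨K, -, hK⟩ := exists_lazyP_le_rpow (d := d) (by lia)
  have hd3 : (3 : ℝ) ≤ d := by exact_mod_cast hd
  rw [← summable_nat_add_iff 1]
  exact .of_nonneg_of_le (fun k => lazyP_nonneg _ _ _) (fun k => hK _ _ _ (by lia))
    (((summable_nat_add_iff 1).2 (Real.summable_nat_rpow.2 (by linarith))).mul_left K)

/-- The Green function as half the sum of the lazy kernels: the covariance of `φ` in a truncation
coupling. -/
def lazyGreen (d : ℕ) (x y : V d) : ℝ := (1 / 2) * ∑' k, lazyP d k x y

lemma covTrunc_add_covTail (hd : 3 ≤ d) (L : ℕ) (x y : V d) :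
    covTrunc d L x y + covTail d L x y = lazyGreen d x y := by
  rw [covTrunc, covTail, lazyGreen, ← mul_add]
  exact congrArg _ ((summable_lazyP hd x y).sum_add_tsum_nat_add (L + 1))

lemma lazyGreen_sub_nnAvg (hd : 3 ≤ d) (x y : V d) :
    lazyGreen d x y - nnAvg (fun z => lazyGreen d z y) x = if x = y then 1 else 0 := by
  have hsummable := fun z => summable_lazyP hd z y
  have hfirst : ∑' k, lazyP d k x y =
      (if x = y then 1 else 0) + lazyAvg (fun z => ∑' k, lazyP d k z y) x := by
    rw [(hsummable x).tsum_eq_zero_add]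
    exact congrArg _ (hasSum_lazyAvg hsummable x).tsum_eq
  rw [lazyAvg_eq_half_add_half_nnAvg] at hfirst
  simp only [lazyGreen, nnAvg_const_mul]
  linarith

lemma summable_nat_add_rpow {p : ℝ} (hp : p < -1) (L : ℕ) :
    Summable fun k : ℕ => ((k + L + 1 : ℕ) : ℝ) ^ p :=
  (summable_nat_add_iff (f := fun k : ℕ => (k : ℝ) ^ p) (L + 1)).2 (Real.summable_nat_rpow.2 hp)

lemma exists_tsum_nat_add_rpow_le : ∃ S : ℝ, 0 < S ∧ ∀ L : ℕ, 1 ≤ L →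
    ∑' k : ℕ, ((k + L + 1 : ℕ) : ℝ) ^ (-(3 / 2 : ℝ)) ≤ S * (L : ℝ) ^ (-(1 / 4 : ℝ)) := by
  have hsum : Summable fun k : ℕ => (k : ℝ) ^ (-(5 / 4 : ℝ)) :=
    Real.summable_nat_rpow.2 (by norm_num)
  refine ⟨∑' k : ℕ, (k : ℝ) ^ (-(5 / 4 : ℝ)),
    hsum.tsum_pos (fun i => by positivity) 1 (by norm_num), fun L hL => ?_⟩
  -- `3/2 = 5/4 + 1/4`: a quarter of the decay is given to `L`, the rest remains summable.
  have hterm (k : ℕ) : ((k + L + 1 : ℕ) : ℝ) ^ (-(3 / 2 : ℝ)) ≤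
      ((k + L + 1 : ℕ) : ℝ) ^ (-(5 / 4 : ℝ)) * (L : ℝ) ^ (-(1 / 4 : ℝ)) := by
    have hle : (L : ℝ) ≤ ((k + L + 1 : ℕ) : ℝ) := by exact_mod_cast (by lia : L ≤ k + L + 1)
    rw [show -(3 / 2 : ℝ) = -(5 / 4) + -(1 / 4) by norm_num, Real.rpow_add (by positivity)]
    gcongr _ * ?_
    exact Real.rpow_le_rpow_of_nonpos (by positivity) hle (by norm_num)
  calc ∑' k : ℕ, ((k + L + 1 : ℕ) : ℝ) ^ (-(3 / 2 : ℝ))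
      ≤ ∑' k : ℕ, ((k + L + 1 : ℕ) : ℝ) ^ (-(5 / 4 : ℝ)) * (L : ℝ) ^ (-(1 / 4 : ℝ)) :=
        (summable_nat_add_rpow (by norm_num) L).tsum_le_tsum hterm
          ((summable_nat_add_rpow (by norm_num) L).mul_right _)
    _ ≤ _ := by
        rw [tsum_mul_right]
        exact mul_le_mul_of_nonneg_right (tsum_comp_le_tsum_of_inj hsum (fun i => by positivity)
          (i := fun k => k + L + 1) (fun a b hab => by simpa using hab)) (by positivity)

lemma exists_covTail_le (hd : 3 ≤ d) : ∃ K : ℝ, 0 < K ∧ ∀ (L : ℕ) (x y : V d), 1 ≤ L →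
    covTail d L x y ≤ K * (L : ℝ) ^ (-(1 / 4 : ℝ)) := by
  obtain ⟨K, hK, hheat⟩ := exists_lazyP_le_rpow (d := d) (by lia)
  obtain ⟨S, hS, htsum⟩ := exists_tsum_nat_add_rpow_le
  have hd3 : (3 : ℝ) ≤ d := by exact_mod_cast hd
  refine ⟨1 / 2 * (K * S), by positivity, fun L x y hL => ?_⟩
  have hterm (k : ℕ) :
      lazyP d (k + L + 1) x y ≤ K * ((k + L + 1 : ℕ) : ℝ) ^ (-(3 / 2 : ℝ)) := by
    refine (hheat _ _ _ (by lia)).trans ?_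
    have hone : (1 : ℝ) ≤ ((k + L + 1 : ℕ) : ℝ) := by exact_mod_cast (by lia : 1 ≤ k + L + 1)
    gcongr K * ?_
    exact Real.rpow_le_rpow_of_exponent_le hone (by linarith)
  have hlazy : Summable fun k => lazyP d (k + L + 1) x y :=
    (summable_nat_add_iff (f := fun k => lazyP d k x y) (L + 1)).2 (summable_lazyP hd x y)
  calc covTail d L x y
      ≤ 1 / 2 * ∑' k : ℕ, K * ((k + L + 1 : ℕ) : ℝ) ^ (-(3 / 2 : ℝ)) :=
        mul_le_mul_of_nonneg_left (hlazy.tsum_le_tsum hterm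
          ((summable_nat_add_rpow (by norm_num) L).mul_left K)) (by norm_num)
    _ ≤ 1 / 2 * (K * (S * (L : ℝ) ^ (-(1 / 4 : ℝ)))) := by
        rw [tsum_mul_left]
        gcongr
        exact htsum L hL
    _ = 1 / 2 * (K * S) * (L : ℝ) ^ (-(1 / 4 : ℝ)) := by ring

end Green

/-! ### Completely positive kernels -/

/-- The kernel `C` is completely positive on `Λ`: its restriction to `Λ` is a finite sum of
kernels `v x * v y` with `v ≥ 0`. A centered Gaussian vector with such a covariance is an
increasing function of independent Gaussian variables, which is what makes it associated. -/
def IsCompletelyPositiveOn {α : Type*} (Λ : Finset α) (C : α → α → ℝ) : Prop :=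
  ∃ (ι : Type) (_ : Fintype ι) (v : ι → α → ℝ), (∀ j x, 0 ≤ v j x) ∧
    ∀ x ∈ Λ, ∀ y ∈ Λ, C x y = ∑ j, v j x * v j y

lemma sum_mul_sum_mul_mul_eq_sum_sq {α ι : Type*} [Fintype ι] {Λ : Finset α} {C : α → α → ℝ}
    {v : ι → α → ℝ} (hC : ∀ x ∈ Λ, ∀ y ∈ Λ, C x y = ∑ j, v j x * v j y) (a : α → ℝ) :
    ∑ x ∈ Λ, ∑ y ∈ Λ, a x * a y * C x y = ∑ j, (∑ x ∈ Λ, a x * v j x) ^ 2 := by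
  simp_rw [sq, Finset.sum_mul_sum]
  rw [Finset.sum_comm (s := Finset.univ)]
  refine Finset.sum_congr rfl fun x hx => ?_
  rw [Finset.sum_comm]
  refine Finset.sum_congr rfl fun y hy => ?_
  rw [hC x hx y hy, Finset.mul_sum]
  exact Finset.sum_congr rfl fun j _ => by ring

namespace IsCompletelyPositiveOn

variable {α : Type*} {Λ : Finset α} {C C' : α → α → ℝ}

lemma zero : IsCompletelyPositiveOn Λ fun _ _ => 0 :=
  ⟨Empty, inferInstance, fun _ _ => 0, fun _ _ => le_rfl, fun _ _ _ _ => by simp⟩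

lemma rankOne {u : α → ℝ} (hu : ∀ x, 0 ≤ u x) : IsCompletelyPositiveOn Λ fun x y => u x * u y :=
  ⟨Unit, inferInstance, fun _ => u, fun _ => hu, fun _ _ _ _ => by simp⟩

lemma congr (h : IsCompletelyPositiveOn Λ C) (hCC' : ∀ x ∈ Λ, ∀ y ∈ Λ, C' x y = C x y) :
    IsCompletelyPositiveOn Λ C' := by
  obtain ⟨ι, hι, v, hv, hC⟩ := h
  exact ⟨ι, hι, v, hv, fun x hx y hy => (hCC' x hx y hy).trans (hC x hx y hy)⟩

lemma add (h : IsCompletelyPositiveOn Λ C) (h' : IsCompletelyPositiveOn Λ C') :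
    IsCompletelyPositiveOn Λ fun x y => C x y + C' x y := by
  obtain ⟨ι, _, v, hv, hC⟩ := h
  obtain ⟨κ, _, w, hw, hC'⟩ := h'
  refine ⟨ι ⊕ κ, inferInstance, Sum.elim v w, Sum.rec hv hw, fun x hx y hy => ?_⟩
  simp [hC x hx y hy, hC' x hx y hy]

lemma const_mul (h : IsCompletelyPositiveOn Λ C) {c : ℝ} (hc : 0 ≤ c) :
    IsCompletelyPositiveOn Λ fun x y => c * C x y := by
  obtain ⟨ι, _, v, hv, hC⟩ := h
  refine ⟨ι, inferInstance, fun j x => √c * v j x, fun j x => mul_nonneg (by positivity) (hv j x),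
    fun x hx y hy => ?_⟩
  simp only [hC x hx y hy, Finset.mul_sum]
  exact Finset.sum_congr rfl fun j _ => by rw [mul_mul_mul_comm, Real.mul_self_sqrt hc]

lemma sum {κ : Type*} {C : κ → α → α → ℝ} (s : Finset κ)
    (h : ∀ k ∈ s, IsCompletelyPositiveOn Λ (C k)) :
    IsCompletelyPositiveOn Λ fun x y => ∑ k ∈ s, C k x y := by
  classical
  induction s using Finset.induction_on with
  | empty => simpa using zero
  | insert a s ha ih =>
    simp_rw [Finset.sum_insert ha]
    exact (h a (Finset.mem_insert_self a s)).add
      (ih fun k hk => h k (Finset.mem_insert_of_mem hk))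

lemma quadraticForm_nonneg (h : IsCompletelyPositiveOn Λ C) (a : α → ℝ) :
    0 ≤ ∑ x ∈ Λ, ∑ y ∈ Λ, a x * a y * C x y := by
  obtain ⟨ι, _, v, -, hC⟩ := h
  rw [sum_mul_sum_mul_mul_eq_sum_sq hC]
  positivity

end IsCompletelyPositiveOn

section LazyKernel

variable {d : ℕ}

/-- The sites at distance at most one from `Λ`. -/
def nbhd (Λ : Finset (V d)) : Finset (V d) :=
  Λ ∪ (Finset.univ.biUnion fun i => Λ.image (· + unitV d i)) ∪
    (Finset.univ.biUnion fun i => Λ.image (· - unitV d i))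

section Nbhd

variable {Λ : Finset (V d)} {x : V d}

lemma mem_nbhd_of_mem (hx : x ∈ Λ) : x ∈ nbhd Λ := by
  simp [nbhd, hx]

lemma add_unitV_mem_nbhd (hx : x ∈ Λ) (i : Fin d) : x + unitV d i ∈ nbhd Λ :=
  Finset.mem_union_left _ <| Finset.mem_union_right _ <|
    Finset.mem_biUnion.2 ⟨i, Finset.mem_univ i, Finset.mem_image_of_mem _ hx⟩

lemma sub_unitV_mem_nbhd (hx : x ∈ Λ) (i : Fin d) : x - unitV d i ∈ nbhd Λ :=
  Finset.mem_union_right _ <|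
    Finset.mem_biUnion.2 ⟨i, Finset.mem_univ i, Finset.mem_image_of_mem _ hx⟩

lemma lazyAvg_congr_of_eqOn_nbhd {f g : V d → ℝ} (hx : x ∈ Λ) (hfg : ∀ z ∈ nbhd Λ, f z = g z) :
    lazyAvg f x = lazyAvg g x := by
  simp only [lazyAvg, hfg x (mem_nbhd_of_mem hx), hfg _ (add_unitV_mem_nbhd hx _),
    hfg _ (sub_unitV_mem_nbhd hx _)]

lemma IsCompletelyPositiveOn.lazyAvg_lazyAvg {C : V d → V d → ℝ}
    (h : IsCompletelyPositiveOn (nbhd Λ) C) :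
    IsCompletelyPositiveOn Λ fun x y => lazyAvg (fun z => lazyAvg (fun w => C z w) y) x := by
  obtain ⟨ι, _, v, hv, hC⟩ := h
  refine ⟨ι, inferInstance, fun j => lazyAvg (v j), fun j => lazyAvg_nonneg (hv j),
    fun x hx y hy => ?_⟩
  have hinner (z : V d) (hz : z ∈ nbhd Λ) :
      lazyAvg (fun w => C z w) y = ∑ j, lazyAvg (v j) y * v j z := by
    rw [lazyAvg_congr_of_eqOn_nbhd hy (hC z hz), lazyAvg_sum]
    simp only [lazyAvg_const_mul, mul_comm]
  beta_reduce
  rw [lazyAvg_congr_of_eqOn_nbhd hx hinner, lazyAvg_sum]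
  exact Finset.sum_congr rfl fun j _ => by rw [lazyAvg_const_mul, mul_comm]

end Nbhd

lemma sum_ite_eq_mul_ite_eq {α : Type*} [DecidableEq α] {Λ : Finset α} {x : α} (hx : x ∈ Λ)
    (y : α) :
    ∑ z ∈ Λ, (if x = z then (1 : ℝ) else 0) * (if y = z then 1 else 0) =
      if x = y then 1 else 0 := by
  simp only [ite_mul, one_mul, zero_mul, Finset.sum_ite_eq, if_pos hx, eq_comm]

lemma isCompletelyPositiveOn_lazyP_zero (Λ : Finset (V d)) :
    IsCompletelyPositiveOn Λ (lazyP d 0) :=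
  (IsCompletelyPositiveOn.sum Λ fun z _ =>
    .rankOne (u := fun x => if x = z then 1 else 0) fun x => by split_ifs <;> norm_num).congr
      fun _ hx y _ => (sum_ite_eq_mul_ite_eq hx y).symm

lemma sum_edge_indicator_mul {Λ : Finset (V d)} {x : V d} (hx : x ∈ Λ) (y : V d) (i : Fin d) :
    ∑ z ∈ nbhd Λ, ((if x = z then (1 : ℝ) else 0) + (if x - unitV d i = z then 1 else 0)) *
        ((if y = z then 1 else 0) + (if y - unitV d i = z then 1 else 0)) =
      2 * (if x = y then 1 else 0) +
        ((if x + unitV d i = y then 1 else 0) + (if x - unitV d i = y then 1 else 0)) := by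
  simp only [add_mul, mul_add, Finset.sum_add_distrib, sum_ite_eq_mul_ite_eq (mem_nbhd_of_mem hx),
    sum_ite_eq_mul_ite_eq (sub_unitV_mem_nbhd hx i), sub_left_inj,
    eq_sub_iff_add_eq (a := x)]
  ring

/-- One step of the lazy walk chooses an edge at `x` uniformly, then one of its two endpoints. -/
lemma lazyP_one_eq_sum_edges (hd : 0 < d) {Λ : Finset (V d)} {x : V d} (hx : x ∈ Λ) (y : V d) :
    lazyP d 1 x y = 1 / (4 * d) * ∑ i : Fin d, ∑ z ∈ nbhd Λ,
      ((if x = z then 1 else 0) + (if x - unitV d i = z then 1 else 0)) *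
        ((if y = z then 1 else 0) + (if y - unitV d i = z then 1 else 0)) := by
  have hd' : (d : ℝ) ≠ 0 := by positivity
  simp only [sum_edge_indicator_mul hx, lazyP]
  rw [Finset.sum_add_distrib (f := fun _ => 2 * _), Finset.sum_const, Finset.card_univ,
    Fintype.card_fin, nsmul_eq_mul]
  field_simp
  ring

lemma isCompletelyPositiveOn_lazyP_one (hd : 0 < d) (Λ : Finset (V d)) :
    IsCompletelyPositiveOn Λ (lazyP d 1) :=
  ((IsCompletelyPositiveOn.sum Finset.univ fun i _ => IsCompletelyPositiveOn.sum (nbhd Λ) fun z _ =>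
    .rankOne (u := fun x => (if x = z then 1 else 0) + (if x - unitV d i = z then 1 else 0))
      fun x => by split_ifs <;> norm_num).const_mul (by positivity)).congr
        fun _ hx y _ => lazyP_one_eq_sum_edges hd hx y

lemma isCompletelyPositiveOn_lazyP (hd : 0 < d) (k : ℕ) (Λ : Finset (V d)) :
    IsCompletelyPositiveOn Λ (lazyP d k) := by
  induction k using Nat.twoStepInduction generalizing Λ with
  | zero => exact isCompletelyPositiveOn_lazyP_zero Λ
  | one => exact isCompletelyPositiveOn_lazyP_one hd Λ
  | more k ih _ => simpa only [← lazyP_add_two] using (ih (nbhd Λ)).lazyAvg_lazyAvg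

lemma isCompletelyPositiveOn_covTrunc (hd : 0 < d) (L : ℕ) (Λ : Finset (V d)) :
    IsCompletelyPositiveOn Λ (covTrunc d L) :=
  (IsCompletelyPositiveOn.sum _ fun k _ => isCompletelyPositiveOn_lazyP hd k Λ).const_mul
    (by norm_num)

lemma quadraticForm_covTail_nonneg (hd : 3 ≤ d) (L : ℕ) (Λ : Finset (V d)) (a : V d → ℝ) :
    0 ≤ ∑ x ∈ Λ, ∑ y ∈ Λ, a x * a y * covTail d L x y := by
  have hcov (x y : V d) :
      HasSum (fun k => 1 / 2 * lazyP d (k + L + 1) x y) (covTail d L x y) :=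
    ((summable_nat_add_iff (f := fun k => lazyP d k x y) (L + 1)).2
      (summable_lazyP hd x y)).hasSum.mul_left _
  refine (hasSum_sum fun x _ => hasSum_sum fun y _ =>
    (hcov x y).mul_left (a x * a y)).nonneg fun k => ?_
  exact ((isCompletelyPositiveOn_lazyP (by lia) _ Λ).const_mul (by norm_num)).quadraticForm_nonneg a

end LazyKernel

/-! ### Association -/

/-- The measure `μ` is (positively) associated: increasing functions are positively correlated. -/
def IsAssociated {α : Type*} [MeasurableSpace α] [Preorder α] (μ : Measure α) : Prop :=
  ∀ f g : α → ENNReal, Measurable f → Measurable g → Monotone f → Monotone g →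
    (∫⁻ x, f x ∂μ) * (∫⁻ x, g x ∂μ) ≤ ∫⁻ x, f x * g x ∂μ

section Association

variable {α β : Type*} [MeasurableSpace α] [MeasurableSpace β]

lemma lintegral_lintegral_mul_add_mul_swap {μ : Measure α} {f g : α → ENNReal} (hf : Measurable f)
    (hg : Measurable g) :
    ∫⁻ x, ∫⁻ y, (f x * g y + f y * g x) ∂μ ∂μ = 2 * ((∫⁻ x, f x ∂μ) * ∫⁻ x, g x ∂μ) := by
  have hinner (x : α) : ∫⁻ y, (f x * g y + f y * g x) ∂μ =
      f x * (∫⁻ y, g y ∂μ) + (∫⁻ y, f y ∂μ) * g x := by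
    rw [lintegral_add_left (by fun_prop), lintegral_const_mul _ hg, lintegral_mul_const _ hf]
  simp_rw [hinner]
  rw [lintegral_add_left (by fun_prop), lintegral_mul_const _ hf, lintegral_const_mul _ hg, two_mul]

lemma lintegral_lintegral_add_self (μ : Measure α) [IsProbabilityMeasure μ] (f : α → ENNReal) :
    ∫⁻ x, ∫⁻ y, (f x + f y) ∂μ ∂μ = 2 * ∫⁻ x, f x ∂μ := by
  simp_rw [lintegral_add_left measurable_const, lintegral_const, measure_univ, mul_one]
  rw [lintegral_add_right _ measurable_const, lintegral_const, measure_univ, mul_one, two_mul]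

lemma mul_add_mul_le_mul_add_mul_of_canonicallyOrdered {R : Type*} [CommSemiring R] [PartialOrder R]
    [CanonicallyOrderedAdd R] {a b c e : R} (hab : a ≤ b) (hce : c ≤ e) :
    a * e + b * c ≤ a * c + b * e := by
  obtain ⟨u, rfl⟩ := exists_add_of_le hab
  obtain ⟨w, rfl⟩ := exists_add_of_le hce
  exact le_iff_exists_add.2 ⟨u * w, by ring⟩

/-- Chebyshev's argument: integrate `(f x - f y) * (g x - g y) ≥ 0` over two independent copies. -/
lemma isAssociated_of_linearOrder [LinearOrder α] (μ : Measure α) [IsProbabilityMeasure μ] :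
    IsAssociated μ := by
  intro f g hf hg f_mono g_mono
  have hle (x y : α) : f x * g y + f y * g x ≤ f x * g x + f y * g y := by
    rcases le_total x y with hxy | hxy
    · exact mul_add_mul_le_mul_add_mul_of_canonicallyOrdered (f_mono hxy) (g_mono hxy)
    · rw [add_comm, add_comm (f x * g x)]
      exact mul_add_mul_le_mul_add_mul_of_canonicallyOrdered (f_mono hxy) (g_mono hxy)
  have hint : 2 * ((∫⁻ x, f x ∂μ) * ∫⁻ x, g x ∂μ) ≤ 2 * ∫⁻ x, f x * g x ∂μ := by
    rw [← lintegral_lintegral_mul_add_mul_swap hf hg, ← lintegral_lintegral_add_self]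
    exact lintegral_mono fun x => lintegral_mono fun y => hle x y
  exact (ENNReal.mul_le_mul_iff_right (by norm_num) (by norm_num)).1 hint

lemma isAssociated_dirac [Preorder α] (x : α) : IsAssociated (Measure.dirac x) :=
  fun f g hf hg _ _ => by
    rw [lintegral_dirac' _ hf, lintegral_dirac' _ hg, lintegral_dirac' _ (hf.fun_mul hg)]

lemma IsAssociated.map [Preorder α] [Preorder β] {μ : Measure α} (h : IsAssociated μ) {T : α → β}
    (hT : Measurable T) (T_mono : Monotone T) : IsAssociated (μ.map T) := by
  intro f g hf hg f_mono g_mono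
  rw [lintegral_map hf hT, lintegral_map hg hT, lintegral_map (hf.fun_mul hg) hT]
  exact h _ _ (hf.comp hT) (hg.comp hT) (f_mono.comp T_mono) (g_mono.comp T_mono)

lemma IsAssociated.conv [AddMonoid α] [MeasurableAdd₂ α] [Preorder α] [AddLeftMono α]
    [AddRightMono α] {μ ν : Measure α} [SFinite μ] [SFinite ν] (hμ : IsAssociated μ)
    (hν : IsAssociated ν) : IsAssociated (μ.conv ν) := by
  intro f g hf hg f_mono g_mono
  rw [Measure.lintegral_conv hf, Measure.lintegral_conv hg, Measure.lintegral_conv (hf.fun_mul hg)]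
  have hmeas {f : α → ENNReal} (hf : Measurable f) : Measurable fun x => ∫⁻ y, f (x + y) ∂ν :=
    Measurable.lintegral_prod_right' (f := fun p : α × α => f (p.1 + p.2)) (by fun_prop)
  have hmono {f : α → ENNReal} (hf : Monotone f) : Monotone fun x => ∫⁻ y, f (x + y) ∂ν :=
    fun a b hab => lintegral_mono fun y => hf (add_le_add_left hab y)
  refine (hμ _ _ (hmeas hf) (hmeas hg) (hmono f_mono) (hmono g_mono)).trans ?_
  exact lintegral_mono fun x => hν _ _ (by fun_prop) (by fun_prop)
    (fun a b hab => f_mono (add_le_add_right hab x))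
    (fun a b hab => g_mono (add_le_add_right hab x))

lemma IsAssociated.measure_mul_le_measure_inter [Preorder α] {μ : Measure α} (h : IsAssociated μ)
    {A B : Set α} (hA : MeasurableSet A) (hB : MeasurableSet B) (hA_up : IsUpperSet A)
    (hB_up : IsUpperSet B) : μ A * μ B ≤ μ (A ∩ B) := by
  have hmono {A : Set α} (hA_up : IsUpperSet A) : Monotone (A.indicator (1 : α → ENNReal)) := by
    intro x y hxy
    by_cases hx : x ∈ A
    · simp [hx, hA_up hxy hx]
    · simp [hx]
  have hcor := h _ _ (measurable_one.indicator hA) (measurable_one.indicator hB) (hmono hA_up)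
    (hmono hB_up)
  simp_rw [← inter_indicator_mul, Pi.one_apply, mul_one, ← Pi.one_def] at hcor
  rwa [lintegral_indicator_one hA, lintegral_indicator_one hB,
    lintegral_indicator_one (hA.inter hB)] at hcor

end Association

/-! ### Gaussian fields on finite sets of sites -/

section GaussianVectors

variable {ι : Type*} [Fintype ι]

lemma measure_pi_ext_of_map_sum_mul {μ ν : Measure (ι → ℝ)} [IsFiniteMeasure μ] [IsFiniteMeasure ν]
    (h : ∀ a : ι → ℝ, μ.map (fun f => ∑ i, a i * f i) = ν.map (fun f => ∑ i, a i * f i)) :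
    μ = ν := by
  classical
  refine Measure.ext_of_charFunDual (funext fun T => ?_)
  have hT : (T : (ι → ℝ) → ℝ) = fun f => ∑ i, T (fun j => if i = j then 1 else 0) * f i := by
    funext f
    simpa [mul_comm] using T.toLinearMap.pi_apply_eq_sum_univ f
  rw [charFunDual_eq_charFun_map_one, charFunDual_eq_charFun_map_one, hT, h]

lemma map_sum_mul_conv (μ ν : Measure (ι → ℝ)) [IsFiniteMeasure μ] [IsFiniteMeasure ν]
    (a : ι → ℝ) : (μ.conv ν).map (fun f => ∑ i, a i * f i) =
      (μ.map fun f => ∑ i, a i * f i).conv (ν.map fun f => ∑ i, a i * f i) := by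
  have hclm : ⇑(∑ i, a i • (ContinuousLinearMap.proj i : (ι → ℝ) →L[ℝ] ℝ)) =
      fun f => ∑ i, a i * f i := by
    funext f
    simp
  simpa only [hclm] using Measure.map_conv_continuousLinearMap (μ := μ) (ν := ν)
    (∑ i, a i • (ContinuousLinearMap.proj i : (ι → ℝ) →L[ℝ] ℝ))

lemma map_sum_mul_map_smul_gaussianReal (a u : ι → ℝ) :
    ((gaussianReal 0 1).map fun t : ℝ => t • u).map (fun f => ∑ i, a i * f i) =
      gaussianReal 0 (Real.toNNReal ((∑ i, a i * u i) ^ 2)) := by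
  have hcomp : (fun f : ι → ℝ => ∑ i, a i * f i) ∘ (fun t : ℝ => t • u) =
      fun t => t * ∑ i, a i * u i := by
    funext t
    simp only [Function.comp_apply, Pi.smul_apply, smul_eq_mul, Finset.mul_sum, mul_left_comm]
  rw [Measure.map_map (by fun_prop) (by fun_prop), hcomp, gaussianReal_map_mul_const]
  congr 1
  · simp
  · ext
    simp [sq_nonneg]

lemma exists_isAssociated_map_sum_mul_eq_gaussianReal {κ : Type*} (s : Finset κ) {v : κ → ι → ℝ}
    (hv : ∀ j i, 0 ≤ v j i) :
    ∃ μ : Measure (ι → ℝ), IsProbabilityMeasure μ ∧ IsAssociated μ ∧ ∀ a : ι → ℝ,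
      μ.map (fun f => ∑ i, a i * f i) =
        gaussianReal 0 (Real.toNNReal (∑ j ∈ s, (∑ i, a i * v j i) ^ 2)) := by
  classical
  induction s using Finset.induction_on with
  | empty =>
    refine ⟨Measure.dirac 0, inferInstance, isAssociated_dirac 0, fun a => ?_⟩
    rw [Measure.map_dirac' (by fun_prop)]
    simp
  | insert j s hj ih =>
    obtain ⟨μ, _, μ_assoc, hμ⟩ := ih
    have hmeas : Measurable fun t : ℝ => t • v j := by fun_prop
    have hmono : Monotone fun t : ℝ => t • v j :=
      fun t u htu i => mul_le_mul_of_nonneg_right htu (hv j i)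
    have : IsProbabilityMeasure ((gaussianReal 0 1).map fun t : ℝ => t • v j) :=
      Measure.isProbabilityMeasure_map hmeas.aemeasurable
    refine ⟨μ.conv ((gaussianReal 0 1).map fun t : ℝ => t • v j), inferInstance,
      μ_assoc.conv ((isAssociated_of_linearOrder _).map hmeas hmono), fun a => ?_⟩
    rw [map_sum_mul_conv, hμ, map_sum_mul_map_smul_gaussianReal, gaussianReal_conv_gaussianReal,
      Finset.sum_insert hj, add_comm (_ ^ 2), Real.toNNReal_add (by positivity) (by positivity),
      add_zero]

end GaussianVectors

section FieldOnFinset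

variable {Ω : Type*} {d : ℕ} {Λ : Finset (V d)}

/-- The field `X` on the finite set `Λ`, as a random vector. -/
def restrictField (Λ : Finset (V d)) (X : V d → Ω → ℝ) (ω : Ω) : Λ → ℝ := fun x => X x ω

/-- The superlevel set of a configuration on `Λ`, as a subset of the whole lattice. -/
def finsetLvl (h : ℝ) (f : Λ → ℝ) : Set (V d) := {z | ∃ hz : z ∈ Λ, h ≤ f ⟨z, hz⟩}

lemma finsetLvl_restrictField (Λ : Finset (V d)) (X : V d → Ω → ℝ) (h : ℝ) (ω : Ω) :
    finsetLvl h (restrictField Λ X ω) = lvl X h ω ∩ Λ := by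
  ext z
  simp [finsetLvl, restrictField, lvl, and_comm]

lemma monotone_finsetLvl (h : ℝ) : Monotone (finsetLvl h : (Λ → ℝ) → Set (V d)) :=
  fun _ _ hfg _ ⟨hz, hle⟩ => ⟨hz, hle.trans (hfg _)⟩

lemma measurableSet_finsetLvl (h : ℝ) (p : Set (V d) → Prop) :
    MeasurableSet {f : Λ → ℝ | p (finsetLvl h f)} := by
  have hmeas : Measurable fun (f : Λ → ℝ) (z : Λ) => h ≤ f z :=
    measurable_pi_lambda _ fun z =>
      measurableSet_setOfPred.1 (measurableSet_le measurable_const (measurable_pi_apply z))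
  exact hmeas (Set.toFinite {q : Λ → Prop | p {z | ∃ hz : z ∈ Λ, q ⟨z, hz⟩}}).measurableSet

variable [MeasurableSpace Ω] {P : Measure Ω} {X Y : V d → Ω → ℝ} {C : V d → V d → ℝ}

lemma measurable_restrictField (hX : ∀ x, Measurable (X x)) : Measurable (restrictField Λ X) :=
  measurable_pi_lambda _ fun x => hX x

lemma measurableSet_lvl_inter (hX : ∀ x, Measurable (X x)) (Λ : Finset (V d)) (h : ℝ)
    (p : Set (V d) → Prop) : MeasurableSet {ω | p (lvl X h ω ∩ Λ)} := by
  simp_rw [← finsetLvl_restrictField]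
  exact measurable_restrictField hX (measurableSet_finsetLvl h p)

lemma map_restrictField_finsetLvl (P : Measure Ω) (hX : ∀ x, Measurable (X x)) (Λ : Finset (V d))
    (h : ℝ) (p : Set (V d) → Prop) :
    P.map (restrictField Λ X) {f | p (finsetLvl h f)} = P {ω | p (lvl X h ω ∩ Λ)} := by
  rw [Measure.map_apply (measurable_restrictField hX) (measurableSet_finsetLvl h p)]
  simp only [preimage_ofPred_eq, finsetLvl_restrictField]

lemma IsCGF.map_restrictField_map_sum_mul (hX : IsCGF P X C) (Λ : Finset (V d)) (a : Λ → ℝ) :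
    (P.map (restrictField Λ X)).map (fun f => ∑ i, a i * f i) =
      gaussianReal 0 (Real.toNNReal (∑ x : Λ, ∑ y : Λ, a x * a y * C x y)) := by
  classical
  rw [Measure.map_map (by fun_prop) (measurable_restrictField hX.1)]
  have hlaw := hX.2 Λ (fun x => if h : x ∈ Λ then a ⟨x, h⟩ else 0)
  simp only [← Finset.sum_coe_sort Λ, Finset.coe_mem, dif_pos, Subtype.coe_eta] at hlaw
  exact hlaw

lemma IsCGF.map_restrictField_eq [IsProbabilityMeasure P] (hX : IsCGF P X C) (hY : IsCGF P Y C)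
    (Λ : Finset (V d)) : P.map (restrictField Λ X) = P.map (restrictField Λ Y) :=
  measure_pi_ext_of_map_sum_mul fun a => by
    rw [hX.map_restrictField_map_sum_mul, hY.map_restrictField_map_sum_mul]

lemma IsCGF.measure_lvl_inter_eq [IsProbabilityMeasure P] (hX : IsCGF P X C) (hY : IsCGF P Y C)
    (Λ : Finset (V d)) (h : ℝ) (p : Set (V d) → Prop) :
    P {ω | p (lvl X h ω ∩ Λ)} = P {ω | p (lvl Y h ω ∩ Λ)} := by
  rw [← map_restrictField_finsetLvl P hX.1, ← map_restrictField_finsetLvl P hY.1,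
    hX.map_restrictField_eq hY]

lemma IsCGF.comp_injective (hX : IsCGF P X C) {T : V d → V d} (hT : Function.Injective T)
    (hC : ∀ x y, C (T x) (T y) = C x y) : IsCGF P (fun x => X (T x)) C := by
  classical
  refine ⟨fun x => hX.1 _, fun s a => ?_⟩
  have hlaw := hX.2 (s.image T) (fun x => a (Function.invFun T x))
  simpa only [Finset.sum_image hT.injOn, Function.leftInverse_invFun hT _, hC] using hlaw

lemma IsCGF.isAssociated_map_restrictField [IsProbabilityMeasure P] (hX : IsCGF P X C)
    (hC : IsCompletelyPositiveOn Λ C) : IsAssociated (P.map (restrictField Λ X)) := by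
  obtain ⟨ι, _, v, hv, hC⟩ := hC
  obtain ⟨μ, _, μ_assoc, hμ⟩ := exists_isAssociated_map_sum_mul_eq_gaussianReal Finset.univ
    (v := fun j (x : Λ) => v j x) fun j x => hv j x
  have hlaw : P.map (restrictField Λ X) = μ := measure_pi_ext_of_map_sum_mul fun a => by
    rw [hX.map_restrictField_map_sum_mul, hμ,
      sum_mul_sum_mul_mul_eq_sum_sq (v := fun j (x : Λ) => v j x) fun x _ y _ => hC x x.2 y y.2]
  exact hlaw ▸ μ_assoc

lemma IsCGF.fkg [IsProbabilityMeasure P] (hX : IsCGF P X C) (hC : IsCompletelyPositiveOn Λ C)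
    (h : ℝ) {p q : Set (V d) → Prop} (hp : Monotone p) (hq : Monotone q) :
    P {ω | p (lvl X h ω ∩ Λ)} * P {ω | q (lvl X h ω ∩ Λ)} ≤
      P {ω | p (lvl X h ω ∩ Λ) ∧ q (lvl X h ω ∩ Λ)} := by
  have hupper {p : Set (V d) → Prop} (hp : Monotone p) :
      IsUpperSet {f : Λ → ℝ | p (finsetLvl h f)} :=
    fun f g hfg => hp (monotone_finsetLvl h hfg)
  simp only [← map_restrictField_finsetLvl P hX.1,
    ← map_restrictField_finsetLvl P hX.1 Λ h fun s => p s ∧ q s]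
  exact (hX.isAssociated_map_restrictField hC).measure_mul_le_measure_inter
    (measurableSet_finsetLvl h p) (measurableSet_finsetLvl h q) (hupper hp) (hupper hq)

end FieldOnFinset

/-! ### Connections in level sets -/

section Connectivity

variable {d : ℕ} {S S' A B : Set (V d)} {x y z : V d}

lemma adj_symm (h : adj x y) : adj y x := by
  unfold adj at *
  rw [← h]
  exact Finset.sum_congr rfl fun i _ => by lia

lemma adj_of_forall_ne {i : Fin d} (hi : (x i - y i).natAbs = 1) (hne : ∀ j, j ≠ i → x j = y j) :
    adj x y := by
  rw [adj, Finset.sum_eq_single i (fun j _ hj => by simp [hne j hj]) (by simp), hi]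

lemma adj_add_unitV (x : V d) (i : Fin d) : adj x (x + unitV d i) :=
  adj_of_forall_ne (i := i) (by simp [unitV]) fun j hj => by simp [unitV, hj]

lemma adj_sub_unitV (x : V d) (i : Fin d) : adj x (x - unitV d i) :=
  adj_of_forall_ne (i := i) (by simp [unitV]) fun j hj => by simp [unitV, hj]

lemma ConnIn.mono (h : ConnIn S A B) (hS : S ⊆ S') : ConnIn S' A B := by
  obtain ⟨n, γ, h0, hn, hγ, hadj⟩ := h
  exact ⟨n, γ, h0, hn, fun k hk => hS (hγ k hk), hadj⟩

lemma ConnIn.mem_left (h : ConnIn S {x} {y}) : x ∈ S := by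
  obtain ⟨n, γ, h0, -, hγ, -⟩ := h
  exact mem_singleton_iff.1 h0 ▸ hγ 0 (Nat.zero_le n)

lemma ConnIn.mem_right (h : ConnIn S {x} {y}) : y ∈ S := by
  obtain ⟨n, γ, -, hn, hγ, -⟩ := h
  exact mem_singleton_iff.1 hn ▸ hγ n le_rfl

lemma connIn_refl (hx : x ∈ S) : ConnIn S {x} {x} :=
  ⟨0, fun _ => x, rfl, rfl, fun _ _ => hx, fun _ hk => absurd hk (Nat.not_lt_zero _)⟩

lemma ConnIn.tail (h : ConnIn S {x} {y}) (hz : z ∈ S) (hyz : adj y z) : ConnIn S {x} {z} := by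
  obtain ⟨n, γ, h0, hn, hγ, hadj⟩ := h
  simp only [mem_singleton_iff] at h0 hn
  refine ⟨n + 1, fun k => if k ≤ n then γ k else z, by simp [h0], by simp, fun k _ => ?_,
    fun k hk => ?_⟩
  · by_cases hkn : k ≤ n
    · simpa [hkn] using hγ k hkn
    · simpa [hkn] using hz
  · rcases Nat.lt_succ_iff_lt_or_eq.1 hk with hkn | rfl
    · simpa [hkn.le, Nat.succ_le_of_lt hkn] using hadj k hkn
    · simpa [hn] using hyz

lemma connIn_iff_reflTransGen :
    ConnIn S {x} {y} ↔ x ∈ S ∧ Relation.ReflTransGen (fun a b => adj a b ∧ b ∈ S) x y := by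
  constructor
  · rintro ⟨n, γ, h0, hn, hγ, hadj⟩
    simp only [mem_singleton_iff] at h0 hn
    have hreach (k : ℕ) (hk : k ≤ n) :
        Relation.ReflTransGen (fun a b => adj a b ∧ b ∈ S) x (γ k) := by
      induction k with
      | zero => rw [h0]
      | succ k ih => exact (ih (by lia)).tail ⟨hadj k (by lia), hγ _ hk⟩
    exact ⟨h0 ▸ hγ 0 (Nat.zero_le _), hn ▸ hreach n le_rfl⟩
  · rintro ⟨hx, h⟩
    induction h with
    | refl => exact connIn_refl hx
    | tail _ hbc ih => exact ih.tail hbc.2 hbc.1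

lemma connIn_iff_exists_singleton : ConnIn S A B ↔ ∃ x ∈ A, ∃ y ∈ B, ConnIn S {x} {y} := by
  constructor
  · rintro ⟨n, γ, h0, hn, hγ, hadj⟩
    exact ⟨_, h0, _, hn, n, γ, rfl, rfl, hγ, hadj⟩
  · rintro ⟨x, hx, y, hy, n, γ, h0, hn, hγ, hadj⟩
    exact ⟨n, γ, mem_singleton_iff.1 h0 ▸ hx, mem_singleton_iff.1 hn ▸ hy, hγ, hadj⟩

lemma ConnIn.trans (h : ConnIn S {x} {y}) (h' : ConnIn S {y} {z}) : ConnIn S {x} {z} := by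
  rw [connIn_iff_reflTransGen] at *
  exact ⟨h.1, h.2.trans h'.2⟩

lemma connIn_of_adj (hx : x ∈ S) (hy : y ∈ S) (h : adj x y) : ConnIn S {x} {y} :=
  (connIn_refl hx).tail hy h

lemma ConnIn.symm (h : ConnIn S {x} {y}) : ConnIn S {y} {x} := by
  obtain ⟨hx, hreach⟩ := connIn_iff_reflTransGen.1 h
  clear h
  induction hreach with
  | refl => exact connIn_refl hx
  | tail hb hbc ih =>
    have hb_mem := (connIn_iff_reflTransGen.2 ⟨hx, hb⟩).mem_right
    exact (connIn_of_adj hbc.2 hb_mem (adj_symm hbc.1)).trans ih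

lemma ConnIn.map (h : ConnIn S {x} {y}) {T : V d → V d}
    (hadj : ∀ {a b}, adj a b → adj (T a) (T b)) (hS : ∀ a ∈ S, T a ∈ S') :
    ConnIn S' {T x} {T y} := by
  obtain ⟨n, γ, h0, hn, hγ, hγadj⟩ := h
  exact ⟨n, fun k => T (γ k), congrArg T h0, congrArg T hn, fun k hk => hS _ (hγ k hk),
    fun k hk => hadj (hγadj k hk)⟩

end Connectivity

section Boxes

variable {d : ℕ}

lemma finite_boxI (x : V d) (r : ℕ) : (boxI x r).Finite := by
  refine (Set.finite_Icc (fun i => x i - r) (fun i => x i + r)).subset fun y hy => ?_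
  constructor <;> intro i <;> have hi := hy i <;> simp only <;> lia

lemma boxI_subset_boxI_two_mul {L R : ℕ} {p : V d} (hp : p ∈ boxI (0 : V d) L) (hR : R ≤ L) :
    boxI p R ⊆ boxI (0 : V d) (2 * L) := by
  intro y hy k
  have hpk := hp k
  have hyk := hy k
  simp only [Pi.zero_apply] at *
  lia

lemma mem_boxI_two_mul {L : ℕ} {p : V d} (hp : p ∈ boxI (0 : V d) L) :
    p ∈ boxI (0 : V d) (2 * L) :=
  fun k => (hp k).trans (by lia)

lemma latticeIso_mem_boxI (τ : Equiv.Perm (Fin d)) (s : Fin d → ℤˣ) (a : V d) {x y : V d} {r : ℕ}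
    (hy : y ∈ boxI x r) : latticeIso τ s a y ∈ boxI (latticeIso τ s a x) r := by
  intro i
  have hsub : latticeIso τ s a y i - latticeIso τ s a x i = s i * (y (τ i) - x (τ i)) := by
    simp only [latticeIso]
    ring
  rw [hsub, Int.natAbs_mul, Int.units_natAbs, one_mul]
  exact hy (τ i)

end Boxes

/-- The event that `x` and `y` are connected in `{X ≥ h} ∩ S`. -/
def connEvent {Ω : Type*} {d : ℕ} (X : V d → Ω → ℝ) (h : ℝ) (S : Set (V d)) (x y : V d) : Set Ω :=
  {ω | ConnIn (lvl X h ω ∩ S) {x} {y}}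

/-- The covariance `C` is invariant under the isometries of the lattice. -/
def IsLatticeInvariant {d : ℕ} (C : V d → V d → ℝ) : Prop :=
  ∀ (τ : Equiv.Perm (Fin d)) (s : Fin d → ℤˣ) (a x y : V d),
    C (latticeIso τ s a x) (latticeIso τ s a y) = C x y

section ConnEvent

variable {Ω : Type*} {d : ℕ} {S S' : Set (V d)} {x y z : V d} {h : ℝ}

lemma connEvent_mono (X : V d → Ω → ℝ) (h : ℝ) (hS : S ⊆ S') (x y : V d) :
    connEvent X h S x y ⊆ connEvent X h S' x y :=
  fun _ hω => ConnIn.mono hω (inter_subset_inter_right _ hS)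

lemma connEvent_comm (X : V d → Ω → ℝ) (h : ℝ) (S : Set (V d)) (x y : V d) :
    connEvent X h S x y = connEvent X h S y x :=
  Set.ext fun _ => ⟨ConnIn.symm, ConnIn.symm⟩

lemma connEvent_subset_le (X : V d → Ω → ℝ) (h : ℝ) (S : Set (V d)) (x y : V d) :
    connEvent X h S x y ⊆ {ω | h ≤ X x ω} :=
  fun _ hω => (ConnIn.mem_left hω).1

lemma connEvent_self (X : V d → Ω → ℝ) (h : ℝ) (hx : x ∈ S) :
    connEvent X h S x x = {ω | h ≤ X x ω} :=
  (connEvent_subset_le X h S x x).antisymm fun _ hω => connIn_refl ⟨hω, hx⟩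

variable [MeasurableSpace Ω] {P : Measure Ω} {X : V d → Ω → ℝ} {C : V d → V d → ℝ}

lemma IsCGF.map_apply_eq_gaussianReal (hX : IsCGF P X C) (x : V d) :
    P.map (X x) = gaussianReal 0 (C x x).toNNReal := by
  simpa only [Finset.sum_singleton, Pi.one_apply, one_mul] using hX.2 {x} 1

lemma IsCGF.measure_le_apply (hX : IsCGF P X C) (h : ℝ) (x : V d) :
    P {ω | h ≤ X x ω} = gaussianReal 0 (C x x).toNNReal (Ici h) := by
  rw [← hX.map_apply_eq_gaussianReal, Measure.map_apply (hX.1 x) measurableSet_Ici]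
  rfl

lemma IsCGF.measure_le_apply_pos (hX : IsCGF P X C) (h : ℝ) (hC : 0 < C x x) :
    0 < P {ω | h ≤ X x ω} := by
  rw [hX.measure_le_apply, pos_iff_ne_zero]
  intro hzero
  have hvol := gaussianReal_absolutelyContinuous' 0 (Real.toNNReal_pos.2 hC).ne' hzero
  simp at hvol

lemma IsLatticeInvariant.apply_self_eq (hC : IsLatticeInvariant C) (x y : V d) :
    C x x = C y y := by
  rw [← hC (Equiv.refl _) 1 (y - x) x x]
  congr 1 <;> ext i <;> simp [latticeIso]

variable [IsProbabilityMeasure P]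

lemma IsCGF.measure_connEvent_boxI_le_latticeIso (hX : IsCGF P X C) (hC : IsLatticeInvariant C)
    (h : ℝ) (τ : Equiv.Perm (Fin d)) (s : Fin d → ℤˣ) (a x y z : V d) (R : ℕ) :
    P (connEvent X h (boxI z R) x y) ≤ P (connEvent X h (boxI (latticeIso τ s a z) R)
      (latticeIso τ s a x) (latticeIso τ s a y)) := by
  have hlaw := hX.measure_lvl_inter_eq
    (hX.comp_injective (latticeIso_injective τ s a) (hC τ s a)) (finite_boxI z R).toFinset h
    fun s => ConnIn s {x} {y}
  rw [(finite_boxI z R).coe_toFinset] at hlaw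
  refine hlaw.trans_le (measure_mono fun ω hω => ?_)
  exact ConnIn.map hω (adj_latticeIso τ s a) fun v hv => ⟨hv.1, latticeIso_mem_boxI τ s a hv.2⟩

lemma IsCGF.measure_connEvent_trans (hX : IsCGF P X C) (hC : ∀ Λ, IsCompletelyPositiveOn Λ C)
    (hS : S.Finite) (h : ℝ) (x y z : V d) :
    P (connEvent X h S x y) * P (connEvent X h S y z) ≤ P (connEvent X h S x z) := by
  have hfkg := hX.fkg (hC hS.toFinset) h (p := fun s => ConnIn s {x} {y})
    (q := fun s => ConnIn s {y} {z}) (fun _ _ hst hs => hs.mono hst) fun _ _ hst hs => hs.mono hst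
  rw [hS.coe_toFinset] at hfkg
  exact hfkg.trans (measure_mono fun ω hω => hω.1.trans hω.2)

lemma IsCGF.measure_connEvent_tail (hX : IsCGF P X C) (hC : ∀ Λ, IsCompletelyPositiveOn Λ C)
    (hS : S.Finite) (h : ℝ) (x : V d) (hz : z ∈ S) (hyz : adj y z) :
    P (connEvent X h S x y) * P {ω | h ≤ X z ω} ≤ P (connEvent X h S x z) := by
  have hfkg := hX.fkg (hC hS.toFinset) h (p := fun s => ConnIn s {x} {y}) (q := fun s => z ∈ s)
    (fun _ _ hst hs => hs.mono hst) fun _ _ hst hs => hst hs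
  have hopen : {ω | z ∈ lvl X h ω ∩ S} = {ω | h ≤ X z ω} := by
    ext ω
    simp [lvl, hz]
  rw [hS.coe_toFinset, hopen] at hfkg
  exact hfkg.trans (measure_mono fun ω hω => hω.1.tail hω.2 hyz)

end ConnEvent

/-! ### Chaining arms -/

/-- At every scale `1 ≤ R ≤ L` some vertex is connected within its `R`-box to some vertex on the
boundary of that box with probability at least `β`, in the field `X` above level `h`. -/
def HasArms {Ω : Type*} [MeasurableSpace Ω] {d : ℕ} (P : Measure Ω) (X : V d → Ω → ℝ) (h : ℝ)
    (L : ℕ) (β : ENNReal) : Prop :=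
  ∀ R, 1 ≤ R → R ≤ L → ∃ (z w : V d) (j : Fin d), (w j - z j).natAbs = R ∧
    β ≤ P (connEvent X h (boxI z R) z w)

section Chaining

variable {Ω : Type*} [MeasurableSpace Ω] {d : ℕ} {P : Measure Ω}
  {X : V d → Ω → ℝ} {C : V d → V d → ℝ} {L : ℕ} {h : ℝ} {β : ENNReal}

lemma HasArms.le_measure_le_apply (hβ : HasArms P X h L β) (hL : 1 ≤ L) (hX : IsCGF P X C)
    (hinv : IsLatticeInvariant C) (p : V d) : β ≤ P {ω | h ≤ X p ω} := by
  obtain ⟨z, w, -, -, hzw⟩ := hβ 1 le_rfl hL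
  calc β ≤ P {ω | h ≤ X z ω} := hzw.trans (measure_mono (connEvent_subset_le X h _ z w))
    _ = P {ω | h ≤ X p ω} := by
      rw [hX.measure_le_apply, hX.measure_le_apply, hinv.apply_self_eq z p]

variable [IsProbabilityMeasure P]

lemma HasArms.le_one (hβ : HasArms P X h L β) (hL : 1 ≤ L) : β ≤ 1 := by
  obtain ⟨z, w, -, -, hzw⟩ := hβ 1 le_rfl hL
  exact hzw.trans prob_le_one

lemma IsCGF.exists_le_measure_connEvent_of_natAbs_eq (hX : IsCGF P X C)
    (hinv : IsLatticeInvariant C) {R : ℕ} {z w : V d} {j : Fin d} (hw : (w j - z j).natAbs = R)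
    (p : V d) (i : Fin d) {t : ℤ} (ht : t.natAbs = R) :
    ∃ q : V d, q i = p i + t ∧
      P (connEvent X h (boxI z R) z w) ≤ P (connEvent X h (boxI p R) p q) := by
  obtain ⟨u, hu⟩ : ∃ u : ℤˣ, u * (w j - z j) = t := by
    rcases Int.natAbs_eq_natAbs_iff.1 (hw.trans ht.symm) with heq | heq
    · exact ⟨1, by simpa using heq⟩
    · exact ⟨-1, by simp [heq]⟩
  let T := latticeIso (Equiv.swap i j) (Function.update 1 i u)
    (fun k => p k - (Function.update 1 i u : Fin d → ℤˣ) k * z (Equiv.swap i j k))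
  have hTz : T z = p := by
    ext k
    simp [T, latticeIso]
  have hTw : T w i = p i + t := by
    simp only [T, latticeIso, Equiv.swap_apply_left, Function.update_self]
    linear_combination hu
  have hle : P (connEvent X h (boxI z R) z w) ≤ P (connEvent X h (boxI (T z) R) (T z) (T w)) :=
    hX.measure_connEvent_boxI_le_latticeIso hinv h _ _ _ z w z R
  rw [hTz] at hle
  exact ⟨T w, hTw, hle⟩

/-- An arm from `p` to `q` and its reflection in the hyperplane through `q` orthogonal to `e_i`
join `p` to its mirror image. -/
lemma IsCGF.mul_self_le_measure_connEvent_update (hX : IsCGF P X C)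
    (hC : ∀ Λ, IsCompletelyPositiveOn Λ C) (hinv : IsLatticeInvariant C) {p q : V d} {R : ℕ}
    (i : Fin d) {S : Set (V d)} (hS : S.Finite) (hp : boxI p R ⊆ S)
    (hp' : boxI (Function.update p i (2 * q i - p i)) R ⊆ S) :
    P (connEvent X h (boxI p R) p q) * P (connEvent X h (boxI p R) p q) ≤
      P (connEvent X h S p (Function.update p i (2 * q i - p i))) := by
  have hrefl : ∀ v : V d, latticeIso (Equiv.refl _) (Function.update 1 i (-1))
      (Pi.single i (2 * q i)) v = Function.update v i (2 * q i - v i) := by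
    intro v
    ext k
    by_cases hk : k = i
    · subst hk
      simp [latticeIso]
      ring
    · simp [latticeIso, hk]
  have hmirror := hX.measure_connEvent_boxI_le_latticeIso hinv h (Equiv.refl _)
    (Function.update 1 i (-1)) (Pi.single i (2 * q i)) p q p R
  have hfix : Function.update q i (2 * q i - q i) = q := by
    rw [two_mul, add_sub_cancel_right, Function.update_eq_self]
  rw [hrefl, hrefl, hfix, connEvent_comm X h (boxI (Function.update p i _) R)] at hmirror
  calc P (connEvent X h (boxI p R) p q) * P (connEvent X h (boxI p R) p q)
      ≤ P (connEvent X h S p q) *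
          P (connEvent X h S q (Function.update p i (2 * q i - p i))) :=
        mul_le_mul' (measure_mono (connEvent_mono X h hp p q))
          (hmirror.trans (measure_mono (connEvent_mono X h hp' _ _)))
    _ ≤ _ := hX.measure_connEvent_trans hC hS h p q _

lemma HasArms.sq_le_measure_connEvent_update (hβ : HasArms P X h L β) (hL : 1 ≤ L)
    (hX : IsCGF P X C) (hC : ∀ Λ, IsCompletelyPositiveOn Λ C) (hinv : IsLatticeInvariant C)
    {p : V d} (hp : p ∈ boxI 0 L) (i : Fin d) {t : ℤ} (ht : t.natAbs ≤ L)
    (hpt : Function.update p i (p i + 2 * t) ∈ boxI 0 L) :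
    β ^ 2 ≤ P (connEvent X h (boxI 0 (2 * L)) p (Function.update p i (p i + 2 * t))) := by
  rcases eq_or_ne t 0 with rfl | ht0
  · rw [mul_zero, add_zero, Function.update_eq_self, connEvent_self X h (mem_boxI_two_mul hp)]
    exact (pow_le_of_le_one zero_le (hβ.le_one hL) two_ne_zero).trans
      (hβ.le_measure_le_apply hL hX hinv p)
  · obtain ⟨z, w, j, hj, hzw⟩ := hβ t.natAbs (Int.natAbs_pos.2 ht0) ht
    obtain ⟨q, hq, hpq⟩ := hX.exists_le_measure_connEvent_of_natAbs_eq hinv hj p i (h := h) rfl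
    have hmid : 2 * q i - p i = p i + 2 * t := by rw [hq]; ring
    have hjoin := hX.mul_self_le_measure_connEvent_update hC hinv (h := h) (q := q) i
      (finite_boxI 0 (2 * L)) (boxI_subset_boxI_two_mul hp ht)
      (boxI_subset_boxI_two_mul (by rwa [hmid]) ht)
    rw [hmid] at hjoin
    rw [sq]
    exact (mul_le_mul' (hzw.trans hpq) (hzw.trans hpq)).trans hjoin

lemma update_mem_boxI_zero {p : V d} (hp : p ∈ boxI 0 L) (i : Fin d) {t : ℤ} (ht : t.natAbs ≤ L) :
    Function.update p i t ∈ boxI 0 L := by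
  intro k
  by_cases hk : k = i
  · subst hk
    simpa using ht
  · simpa [hk] using hp k

lemma exists_even_shift_near {a b : ℤ} (ha : a.natAbs ≤ L) (hb : b.natAbs ≤ L) :
    ∃ t : ℤ, t.natAbs ≤ L ∧ (a + 2 * t).natAbs ≤ L ∧
      (a + 2 * t = b ∨ (a + 2 * t - b).natAbs = 1) := by
  rcases le_total a b with hab | hba
  · exact ⟨(b - a) / 2, by lia, by lia, by lia⟩
  · exact ⟨-((a - b) / 2), by lia, by lia, by lia⟩

lemma HasArms.cube_le_measure_connEvent_update (hβ : HasArms P X h L β) (hL : 1 ≤ L)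
    (hX : IsCGF P X C) (hC : ∀ Λ, IsCompletelyPositiveOn Λ C) (hinv : IsLatticeInvariant C)
    {p : V d} (hp : p ∈ boxI 0 L) (i : Fin d) {b : ℤ} (hb : b.natAbs ≤ L) :
    β ^ 3 ≤ P (connEvent X h (boxI 0 (2 * L)) p (Function.update p i b)) := by
  obtain ⟨t, ht, hpt, heq | hone⟩ := exists_even_shift_near (by simpa using hp i) hb
  · have hsq := hβ.sq_le_measure_connEvent_update hL hX hC hinv hp i ht
      (update_mem_boxI_zero hp i hpt)
    rw [heq] at hsq
    exact (pow_le_pow_right_of_le_one' (hβ.le_one hL) (by norm_num)).trans hsq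
  · have hadj : adj (Function.update p i (p i + 2 * t)) (Function.update p i b) :=
      adj_of_forall_ne (i := i) (by simpa using hone) fun k hk => by simp [hk]
    calc β ^ 3 = β ^ 2 * β := pow_succ β 2
      _ ≤ _ := mul_le_mul' (hβ.sq_le_measure_connEvent_update hL hX hC hinv hp i ht
            (update_mem_boxI_zero hp i hpt)) (hβ.le_measure_le_apply hL hX hinv _)
      _ ≤ _ := hX.measure_connEvent_tail hC (finite_boxI 0 (2 * L)) h p
            (mem_boxI_two_mul (update_mem_boxI_zero hp i hb)) hadj

/-- Move from `x` to `y` one coordinate at a time. -/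
lemma HasArms.pow_le_measure_connEvent (hβ : HasArms P X h L β) (hL : 1 ≤ L)
    (hX : IsCGF P X C) (hC : ∀ Λ, IsCompletelyPositiveOn Λ C) (hinv : IsLatticeInvariant C)
    {x y : V d} (hx : x ∈ boxI 0 L) (hy : y ∈ boxI 0 L) :
    β ^ (3 * d + 1) ≤ P (connEvent X h (boxI 0 (2 * L)) x y) := by
  suffices hF : ∀ F : Finset (Fin d), β ^ (3 * F.card + 1) ≤
      P (connEvent X h (boxI 0 (2 * L)) x (F.piecewise y x)) by
    simpa using hF Finset.univ
  intro F
  induction F using Finset.induction_on with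
  | empty =>
    rw [Finset.card_empty, mul_zero, zero_add, pow_one, Finset.piecewise_empty,
      connEvent_self X h (mem_boxI_two_mul hx)]
    exact hβ.le_measure_le_apply hL hX hinv x
  | insert i F hi ih =>
    have hmem : F.piecewise y x ∈ boxI 0 L := fun k =>
      F.piecewise_cases y x (fun v : ℤ => (v - (0 : V d) k).natAbs ≤ L) (hy k) (hx k)
    have hstep := hβ.cube_le_measure_connEvent_update hL hX hC hinv hmem i (by simpa using hy i)
    rw [Finset.piecewise_insert, Finset.card_insert_of_notMem hi,
      show 3 * (F.card + 1) + 1 = 3 * F.card + 1 + 3 by ring, pow_add]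
    exact (mul_le_mul' ih hstep).trans
      (hX.measure_connEvent_trans hC (finite_boxI 0 (2 * L)) h _ _ _)

end Chaining

lemma HasArms.mono {Ω : Type*} [MeasurableSpace Ω] {d : ℕ} {P : Measure Ω} {X : V d → Ω → ℝ}
    {h : ℝ} {L : ℕ} {β β' : ENNReal} (hβ : HasArms P X h L β) (hle : β' ≤ β) :
    HasArms P X h L β' := by
  intro R hR hRL
  obtain ⟨z, w, j, hj, hzw⟩ := hβ R hR hRL
  exact ⟨z, w, j, hj, hle.trans hzw⟩

/-- FKG makes a straight segment open with positive probability. -/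
lemma IsCGF.exists_hasArms {Ω : Type*} [MeasurableSpace Ω] {d : ℕ} {P : Measure Ω}
    [IsProbabilityMeasure P] {X : V d → Ω → ℝ} {C : V d → V d → ℝ} (hX : IsCGF P X C)
    (hC : ∀ Λ, IsCompletelyPositiveOn Λ C) (hpos : ∀ x, 0 < C x x) (hd : 0 < d) (h : ℝ) (L : ℕ) :
    ∃ β, 0 < β ∧ HasArms P X h L β := by
  let e : ℕ → V d := fun k => Pi.single ⟨0, hd⟩ (k : ℤ)
  have hmem : ∀ {R k : ℕ}, k ≤ R → e k ∈ boxI 0 R := by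
    intro R k hk
    refine update_mem_boxI_zero (fun _ => ?_) _ ?_ <;> simp [hk]
  have hsegment : ∀ R k : ℕ, k ≤ R → 0 < P (connEvent X h (boxI 0 R) 0 (e k)) := by
    intro R k hk
    induction k with
    | zero =>
      have hzero : e 0 = 0 := by simp [e]
      rw [hzero, connEvent_self X h (hzero ▸ hmem hk)]
      exact hX.measure_le_apply_pos h (hpos 0)
    | succ k ih =>
      have hadj : adj (e k) (e (k + 1)) :=
        adj_of_forall_ne (i := ⟨0, hd⟩) (by simp [e]) fun j hj => by simp [e, hj]
      exact (ENNReal.mul_pos (ih (by lia)).ne' (hX.measure_le_apply_pos h (hpos _)).ne').trans_le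
        (hX.measure_connEvent_tail hC (finite_boxI 0 R) h 0 (hmem hk) hadj)
  refine ⟨(Finset.Icc 1 L).inf fun R => P (connEvent X h (boxI 0 R) 0 (e R)),
    (Finset.lt_inf_iff ENNReal.zero_lt_top).2 fun R _ => hsegment R R le_rfl, ?_⟩
  intro R hR hRL
  exact ⟨0, e R, ⟨0, hd⟩, by simp [e], Finset.inf_le (Finset.mem_Icc.2 ⟨hR, hRL⟩)⟩

/-! ### Annulus crossings contain arms -/

/-- The event that `B_r` is connected to `∂B_{2r}` in `{X ≥ h}`. -/
def crossEvent {Ω : Type*} {d : ℕ} (X : V d → Ω → ℝ) (h : ℝ) (r : ℕ) : Set Ω :=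
  {ω | ConnIn (lvl X h ω) (box d (r : ℝ)) (bdry d (2 * (r : ℝ)))}

section Crossing

variable {d : ℕ} {S : Set (V d)} {x y : V d}

lemma natAbs_sub_le_one_of_adj (h : adj x y) (i : Fin d) : (x i - y i).natAbs ≤ 1 :=
  (Finset.single_le_sum (f := fun i => (x i - y i).natAbs) (fun _ _ => Nat.zero_le _)
    (Finset.mem_univ i)).trans_eq h

lemma mem_box_natCast {n : ℕ} : x ∈ box d (n : ℝ) ↔ x ∈ boxI (0 : V d) n := by
  refine forall_congr' fun i => ?_
  simp only [Pi.zero_apply, Int.cast_zero, sub_zero]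
  rw [← Int.cast_abs, ← Int.cast_natCast (R := ℝ), Int.cast_le, Int.abs_eq_natAbs, Int.ofNat_le]

lemma exists_le_natAbs_of_mem_bdry {n : ℕ} (h : x ∈ bdry d (n : ℝ)) : ∃ i, n ≤ (x i).natAbs := by
  obtain ⟨-, z, hz, hxz⟩ := h
  obtain ⟨i, hi⟩ := not_forall.1 (mt mem_box_natCast.2 hz)
  have hstep := natAbs_sub_le_one_of_adj hxz i
  simp only [Pi.zero_apply] at hi
  exact ⟨i, by lia⟩

lemma ConnIn.exists_natAbs_sub_eq (h : ConnIn S {x} {y}) {r : ℕ} {i : Fin d}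
    (hr : r ≤ (y i - x i).natAbs) :
    ∃ (w : V d) (j : Fin d), (w j - x j).natAbs = r ∧ ConnIn (S ∩ boxI x r) {x} {w} := by
  obtain ⟨hx, hreach⟩ := connIn_iff_reflTransGen.1 h
  have hexit : ConnIn (S ∩ boxI x r) {x} {y} ∨
      ∃ (w : V d) (j : Fin d), (w j - x j).natAbs = r ∧ ConnIn (S ∩ boxI x r) {x} {w} := by
    clear h hr
    induction hreach with
    | refl => exact .inl (connIn_refl ⟨hx, fun j => by simp⟩)
    | @tail b c _ hbc ih =>
      refine ih.elim (fun hb => ?_) .inr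
      by_cases hc : c ∈ boxI x r
      · exact .inl (hb.tail ⟨hbc.2, hc⟩ hbc.1)
      · obtain ⟨j, hj⟩ := not_forall.1 hc
        have hbj := hb.mem_right.2 j
        have hstep := natAbs_sub_le_one_of_adj hbc.1 j
        exact .inr ⟨b, j, by lia, hb⟩
  exact hexit.elim (fun hy => ⟨y, i, (hy.mem_right.2 i).antisymm hr, hy⟩) id

lemma ConnIn.exists_arm {r : ℕ} (h : ConnIn S (box d (r : ℝ)) (bdry d (2 * (r : ℝ)))) :
    ∃ z ∈ boxI (0 : V d) r, ∃ (w : V d) (j : Fin d),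
      (w j - z j).natAbs = r ∧ ConnIn (S ∩ boxI z r) {z} {w} := by
  obtain ⟨z, hz, y, hy, hzy⟩ := connIn_iff_exists_singleton.1 h
  have hz' := mem_box_natCast.1 hz
  obtain ⟨i, hi⟩ := exists_le_natAbs_of_mem_bdry (n := 2 * r) (by exact_mod_cast hy)
  have hzi := hz' i
  simp only [Pi.zero_apply] at hzi
  exact ⟨z, hz', hzy.exists_natAbs_sub_eq (i := i) (by lia)⟩

lemma exists_mem_connEvent_of_mem_crossEvent {Ω : Type*} {φ X : V d → Ω → ℝ} {h h' : ℝ}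
    {R L : ℕ} {ω : Ω} (hR : R ≤ L) (hω : ω ∈ crossEvent φ h' R)
    (hclose : ∀ z ∈ boxI (0 : V d) (2 * L), φ z ω - X z ω < h' - h) :
    ∃ z ∈ boxI (0 : V d) (2 * L), ∃ w ∈ boxI (0 : V d) (2 * L),
      (∃ j, (w j - z j).natAbs = R) ∧ ω ∈ connEvent X h (boxI z R) z w := by
  obtain ⟨z, hz, w, j, hj, hconn⟩ := ConnIn.exists_arm hω
  have hzL : z ∈ boxI (0 : V d) L := fun i => (hz i).trans hR
  have hsub := boxI_subset_boxI_two_mul hzL hR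
  refine ⟨z, mem_boxI_two_mul hzL, w, hsub hconn.mem_right.2, ⟨j, hj⟩, ?_⟩
  refine hconn.mono fun u hu => ⟨?_, hu.2⟩
  have hφ : h' ≤ φ u ω := hu.1
  have hu_close := hclose u (hsub hu.2)
  change h ≤ X u ω
  linarith

end Crossing

/-! ### Smallness of the tail field -/

section Tail

variable {Ω : Type*} [MeasurableSpace Ω] {P : Measure Ω} {d : ℕ}

lemma card_toFinset_boxI_zero (L : ℕ) :
    (finite_boxI (0 : V d) L).toFinset.card = (2 * L + 1) ^ d := by
  have hIcc : (finite_boxI (0 : V d) L).toFinset =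
      Finset.Icc (fun _ => -(L : ℤ)) fun _ => (L : ℤ) := by
    ext y
    simp only [Set.Finite.mem_toFinset, boxI, mem_ofPred_eq, Finset.mem_Icc, Pi.le_def,
      Pi.zero_apply, ← forall_and]
    exact forall_congr' fun i => by lia
  have hfactor : ((L : ℤ) + 1 + L).toNat = 2 * L + 1 := by lia
  simp [hIcc, Pi.card_Icc, hfactor]

lemma card_toFinset_boxI_zero_two_mul_le {L : ℕ} (hL : 1 ≤ L) :
    (finite_boxI (0 : V d) (2 * L)).toFinset.card ≤ (5 * L) ^ d :=
  (card_toFinset_boxI_zero _).trans_le (Nat.pow_le_pow_left (by lia) d)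

lemma exists_div_le_measure {ι : Type*} {s : Finset ι} {A : ι → Set Ω} {c M : ENNReal}
    (hc : c ≠ 0) (hM : (s.card : ENNReal) ≤ M) (h : c ≤ P (⋃ i ∈ s, A i)) :
    ∃ i ∈ s, c / M ≤ P (A i) := by
  have hsum : c ≤ ∑ i ∈ s, P (A i) := h.trans (measure_biUnion_finset_le s A)
  have hs : s.Nonempty := by
    rw [Finset.nonempty_iff_ne_empty]
    rintro rfl
    exact hc (by simpa using hsum)
  by_contra! hcon
  have hlt := ENNReal.sum_lt_sum_of_nonempty hs hcon
  rw [Finset.sum_const, nsmul_eq_mul] at hlt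
  exact ((hsum.trans_lt hlt).trans_le ((mul_le_mul' hM le_rfl).trans ENNReal.mul_div_le)).false

lemma IsCGF.measure_le_apply_le_exp [IsProbabilityMeasure P] {X : V d → Ω → ℝ}
    {C : V d → V d → ℝ} (hX : IsCGF P X C) (x : V d) {δ t v : ℝ} (ht : 0 ≤ t) (hv : C x x ≤ v)
    (hv0 : 0 ≤ v) :
    P {ω | δ ≤ X x ω} ≤ ENNReal.ofReal (Real.exp (-t * δ + v * t ^ 2 / 2)) := by
  have hlaw := hX.map_apply_eq_gaussianReal x
  have hint : Integrable (fun ω => Real.exp (t * X x ω)) P := by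
    have hgauss := integrable_exp_mul_gaussianReal (μ := 0) (v := (C x x).toNNReal) t
    rw [← hlaw] at hgauss
    exact hgauss.comp_measurable (hX.1 x)
  have hchernoff := measure_ge_le_exp_mul_mgf δ ht hint
  rw [mgf_gaussianReal hlaw, ← Real.exp_add, zero_mul, zero_add] at hchernoff
  rw [← ENNReal.ofReal_toReal (measure_ne_top P _)]
  refine ENNReal.ofReal_le_ofReal (hchernoff.trans (Real.exp_le_exp.2 ?_))
  gcongr
  exact Real.coe_toNNReal' _ ▸ max_le hv hv0

/-- The exponential moment of order `t = L^{1/8}` balances the variance bound `K L^{-1/4}`. -/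
lemma tendsto_pow_mul_exp_atTop_zero (d : ℕ) (K : ℝ) {δ : ℝ} (hδ : 0 < δ) :
    Tendsto (fun L : ℕ => (5 * (L : ℝ)) ^ d * Real.exp (-(L : ℝ) ^ (1 / 8 : ℝ) * δ +
      K * (L : ℝ) ^ (-(1 / 4) : ℝ) * ((L : ℝ) ^ (1 / 8 : ℝ)) ^ 2 / 2)) atTop (nhds 0) := by
  have hroot : Tendsto (fun L : ℕ => (L : ℝ) ^ (1 / 8 : ℝ)) atTop atTop :=
    (tendsto_rpow_atTop (by norm_num)).comp tendsto_natCast_atTop_atTop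
  have hlim := ((tendsto_rpow_mul_exp_neg_mul_atTop_nhds_zero (8 * d) δ hδ).comp hroot).const_mul
    (5 ^ d * Real.exp (K / 2))
  rw [mul_zero] at hlim
  refine hlim.congr' ((eventually_ge_atTop 1).mono fun L hL => ?_)
  have hL0 : (0 : ℝ) < L := by exact_mod_cast hL
  have hpow : ((L : ℝ) ^ (1 / 8 : ℝ)) ^ (8 * d : ℝ) = (L : ℝ) ^ d := by
    rw [← Real.rpow_mul hL0.le, ← Real.rpow_natCast]
    ring_nf
  have hone : (L : ℝ) ^ (-(1 / 4) : ℝ) * ((L : ℝ) ^ (1 / 8 : ℝ)) ^ 2 = 1 := by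
    rw [← Real.rpow_natCast, ← Real.rpow_mul hL0.le, ← Real.rpow_add hL0]
    norm_num
  simp only [Function.comp_apply]
  rw [mul_assoc K, hone, mul_one, Real.exp_add, mul_pow, hpow]
  ring_nf

lemma tendsto_measure_exists_le_of_covTail [IsProbabilityMeasure P] (hd : 3 ≤ d)
    {ξ : ℕ → V d → Ω → ℝ} (hξ : ∀ L, IsCGF P (ξ L) (covTail d L)) {δ : ℝ} (hδ : 0 < δ) :
    Tendsto (fun L : ℕ => P {ω | ∃ z ∈ boxI (0 : V d) (2 * L), δ ≤ ξ L z ω}) atTop (nhds 0) := by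
  obtain ⟨K, hK, hcov⟩ := exists_covTail_le hd
  have hlim := ENNReal.tendsto_ofReal (tendsto_pow_mul_exp_atTop_zero d K hδ)
  rw [ENNReal.ofReal_zero] at hlim
  refine tendsto_of_tendsto_of_tendsto_of_le_of_le' tendsto_const_nhds hlim
    (.of_forall fun _ => zero_le) ((eventually_ge_atTop 1).mono fun L hL => ?_)
  let Λ := (finite_boxI (0 : V d) (2 * L)).toFinset
  have hunion : {ω | ∃ z ∈ boxI (0 : V d) (2 * L), δ ≤ ξ L z ω} ⊆ ⋃ z ∈ Λ, {ω | δ ≤ ξ L z ω} := by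
    rintro ω ⟨z, hz, hzδ⟩
    exact mem_biUnion (show z ∈ Λ from (Set.Finite.mem_toFinset _).2 hz) hzδ
  calc P {ω | ∃ z ∈ boxI (0 : V d) (2 * L), δ ≤ ξ L z ω}
      ≤ ∑ z ∈ Λ, P {ω | δ ≤ ξ L z ω} :=
        (measure_mono hunion).trans (measure_biUnion_finset_le _ _)
    _ ≤ Λ.card • ENNReal.ofReal (Real.exp (-(L : ℝ) ^ (1 / 8 : ℝ) * δ +
          K * (L : ℝ) ^ (-(1 / 4) : ℝ) * ((L : ℝ) ^ (1 / 8 : ℝ)) ^ 2 / 2)) :=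
        Finset.sum_le_card_nsmul _ _ _ fun z _ =>
          (hξ L).measure_le_apply_le_exp z (by positivity) (hcov L z z hL) (by positivity)
    _ ≤ _ := by
        rw [nsmul_eq_mul, ← ENNReal.ofReal_natCast, ← ENNReal.ofReal_mul (by positivity)]
        gcongr
        exact_mod_cast card_toFinset_boxI_zero_two_mul_le hL

end Tail

/-! ### Arms of the truncated field -/

section TruncatedArms

variable {Ω : Type*} [MeasurableSpace Ω] {P : Measure Ω} {d : ℕ} {h h' c₀ : ℝ}

lemma hasArms_of_crossEvent {φ X : V d → Ω → ℝ} {L : ℕ} (hL : 1 ≤ L) (hc₀ : 0 < c₀)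
    (hcross : ∀ R, 1 ≤ R → ENNReal.ofReal c₀ ≤ P (crossEvent φ h' R))
    (htail : P {ω | ∃ z ∈ boxI (0 : V d) (2 * L), h' - h ≤ φ z ω - X z ω} ≤
      ENNReal.ofReal (c₀ / 2)) :
    HasArms P X h L (ENNReal.ofReal (c₀ / 2 / ((5 * L) ^ d) ^ 2)) := by
  classical
  intro R hR hRL
  let B := (finite_boxI (0 : V d) (2 * L)).toFinset
  let s := (B ×ˢ B).filter fun q => ∃ j, (q.2 j - q.1 j).natAbs = R
  have hcover : crossEvent φ h' R ⊆ (⋃ q ∈ s, connEvent X h (boxI q.1 R) q.1 q.2) ∪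
      {ω | ∃ z ∈ boxI (0 : V d) (2 * L), h' - h ≤ φ z ω - X z ω} := by
    intro ω hω
    by_contra! hcon
    rw [mem_union, not_or] at hcon
    obtain ⟨z, hz, w, hw, hj, hconn⟩ := exists_mem_connEvent_of_mem_crossEvent (X := X) (h := h)
      hRL hω fun z hz => not_le.1 fun hle => hcon.2 ⟨z, hz, hle⟩
    exact hcon.1 (mem_biUnion (x := (z, w)) (by simp [s, B, hz, hw, hj]) hconn)
  have hunion : ENNReal.ofReal (c₀ / 2) ≤ P (⋃ q ∈ s, connEvent X h (boxI q.1 R) q.1 q.2) := by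
    have hsum := (hcross R hR).trans ((measure_mono hcover).trans (measure_union_le _ _))
    rw [← add_halves c₀, ENNReal.ofReal_add (by positivity) (by positivity)] at hsum
    exact ENNReal.le_of_add_le_add_right ENNReal.ofReal_ne_top
      (hsum.trans (add_le_add_right htail _))
  have hcard : (s.card : ENNReal) ≤ ENNReal.ofReal (((5 * L) ^ d) ^ 2) := by
    rw [← ENNReal.ofReal_natCast]
    refine ENNReal.ofReal_le_ofReal ?_
    have hB := card_toFinset_boxI_zero_two_mul_le (d := d) hL
    have hs : s.card ≤ ((5 * L) ^ d) ^ 2 := by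
      rw [sq]
      exact (Finset.card_filter_le _ _).trans
        ((Finset.card_product _ _).trans_le (Nat.mul_le_mul hB hB))
    exact_mod_cast hs
  obtain ⟨⟨z, w⟩, hzw, hle⟩ := exists_div_le_measure (by simpa using hc₀) hcard hunion
  obtain ⟨j, hj⟩ := (Finset.mem_filter.1 hzw).2
  refine ⟨z, w, j, hj, (ENNReal.ofReal_div_of_pos ?_).trans_le hle⟩
  positivity

variable [IsProbabilityMeasure P]

/-- The finitely many scales at which the tail field is not yet small only affect the constant. -/
lemma IsTruncCoupling.exists_hasArms (hd : 3 ≤ d) {φ : V d → Ω → ℝ} {φL : ℕ → V d → Ω → ℝ}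
    (hcoup : IsTruncCoupling d P φ φL) (hh : h < h') (hc₀ : 0 < c₀)
    (hcross : ∀ R, 1 ≤ R → ENNReal.ofReal c₀ ≤ P (crossEvent φ h' R)) :
    ∃ a : ℝ, 0 < a ∧ ∀ L, 1 ≤ L →
      HasArms P (φL L) h L (ENNReal.ofReal (a / ((L : ℝ) ^ d) ^ 2)) := by
  have htail := tendsto_measure_exists_le_of_covTail hd (fun L => (hcoup L).2.1) (sub_pos.2 hh)
  obtain ⟨L₀, hL₀⟩ := eventually_atTop.1
    (htail.eventually_le_const (ENNReal.ofReal_pos.2 (half_pos hc₀)))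
  choose b hb_pos hb using fun L => (hcoup L).1.exists_hasArms
    (fun Λ => isCompletelyPositiveOn_covTrunc (by lia) L Λ) (covTrunc_self_pos L) (by lia) h L
  let m := min 1 ((Finset.range L₀).inf b)
  have hm_pos : 0 < m := lt_min one_pos <|
    (Finset.lt_inf_iff ENNReal.zero_lt_top).2 fun L _ => hb_pos L
  have hm_top : m ≠ ⊤ := ((min_le_left _ _).trans_lt ENNReal.one_lt_top).ne
  refine ⟨min m.toReal (c₀ / 2 / (5 ^ d) ^ 2),
    lt_min (ENNReal.toReal_pos hm_pos.ne' hm_top) (by positivity), fun L hL => ?_⟩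
  have hL1 : (1 : ℝ) ≤ L := by exact_mod_cast hL
  rcases le_or_gt L₀ L with hlarge | hsmall
  · refine (hasArms_of_crossEvent hL hc₀ hcross (hL₀ L hlarge)).mono
      (ENNReal.ofReal_le_ofReal ?_)
    rw [mul_pow, mul_pow, ← div_div]
    gcongr
    exact min_le_right _ _
  · refine (hb L).mono ?_
    calc ENNReal.ofReal (min m.toReal (c₀ / 2 / (5 ^ d) ^ 2) / ((L : ℝ) ^ d) ^ 2)
        ≤ ENNReal.ofReal m.toReal := ENNReal.ofReal_le_ofReal
          ((div_le_self (by positivity) (one_le_pow₀ (one_le_pow₀ hL1))).trans (min_le_left _ _))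
      _ = m := ENNReal.ofReal_toReal hm_top
      _ ≤ b L := (min_le_right _ _).trans (Finset.inf_le (Finset.mem_range.2 hsmall))

lemma IsTruncCoupling.exists_two_point_bound (hd : 3 ≤ d) {φ : V d → Ω → ℝ}
    {φL : ℕ → V d → Ω → ℝ} (hcoup : IsTruncCoupling d P φ φL) (hh : h < h') (hc₀ : 0 < c₀)
    (hcross : ∀ R, 1 ≤ R → ENNReal.ofReal c₀ ≤ P (crossEvent φ h' R)) :
    ∃ c : ℝ, 0 < c ∧ ∀ L, 1 ≤ L → ∀ x ∈ boxI (0 : V d) L, ∀ y ∈ boxI (0 : V d) L,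
      ENNReal.ofReal (c * (L : ℝ) ^ (-(2 * d * (3 * d + 1)) : ℝ)) ≤
        P (connEvent (φL L) h (boxI (0 : V d) (2 * L)) x y) := by
  obtain ⟨a, ha, harms⟩ := hcoup.exists_hasArms hd hh hc₀ hcross
  refine ⟨a ^ (3 * d + 1), by positivity, fun L hL x hx y hy => ?_⟩
  have hpow : a ^ (3 * d + 1) * (L : ℝ) ^ (-(2 * d * (3 * d + 1)) : ℝ) =
      (a / ((L : ℝ) ^ d) ^ 2) ^ (3 * d + 1) := by
    rw [Real.rpow_neg (by positivity), div_pow, ← pow_mul, ← pow_mul, div_eq_mul_inv,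
      ← Real.rpow_natCast (L : ℝ)]
    push_cast
    ring_nf
  rw [hpow, ENNReal.ofReal_pow (by positivity)]
  exact (harms L hL).pow_le_measure_connEvent hL (hcoup L).1
    (isCompletelyPositiveOn_covTrunc (by lia) L) (covTrunc_latticeIso L) hx hy

end TruncatedArms

/-! ### Conditional harmonicity of the free field -/

section GaussianCovariance

variable {Ω : Type*} [MeasurableSpace Ω] {d : ℕ} {P : Measure Ω} {X : V d → Ω → ℝ}
  {C : V d → V d → ℝ}

lemma IsCGF.measurable_and_exists_map_eq_of_mem_span (hX : IsCGF P X C) {Y : Ω → ℝ}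
    (hY : Y ∈ Submodule.span ℝ (range X)) :
    Measurable Y ∧ ∃ v, P.map Y = gaussianReal 0 v := by
  obtain ⟨a, rfl⟩ := Finsupp.mem_span_range_iff_exists_finsupp.1 hY
  have hsum : (a.sum fun x t => t • X x) = fun ω => ∑ x ∈ a.support, a x * X x ω := by
    funext ω
    simp [Finsupp.sum]
  rw [hsum]
  exact ⟨Finset.measurable_fun_sum _ fun x _ => (hX.1 x).const_mul _, _, hX.2 a.support a⟩

lemma IsCGF.integral_eq_zero_of_mem_span (hX : IsCGF P X C) {Y : Ω → ℝ}
    (hY : Y ∈ Submodule.span ℝ (range X)) : ∫ ω, Y ω ∂P = 0 := by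
  obtain ⟨hY_meas, v, hlaw⟩ := hX.measurable_and_exists_map_eq_of_mem_span hY
  rw [← integral_id_gaussianReal (μ := 0) (v := v), ← hlaw,
    integral_map hY_meas.aemeasurable (by fun_prop)]

lemma IsCGF.isGaussianProcess_of_mem_span (hX : IsCGF P X C) {ι : Type*} {Y : ι → Ω → ℝ}
    (hY : ∀ i, Y i ∈ Submodule.span ℝ (range X)) : IsGaussianProcess Y P := by
  classical
  refine ⟨fun I => ⟨isGaussian_of_map_eq_gaussianReal fun T => ?_⟩⟩
  have hmeas : Measurable fun ω => I.restrict (Y · ω) := measurable_pi_lambda _ fun i =>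
    (hX.measurable_and_exists_map_eq_of_mem_span (hY i)).1
  have hcomp : (T ∘ fun ω => I.restrict (Y · ω)) =
      ∑ i : I, T (fun j => if i = j then 1 else 0) • Y i := by
    funext ω
    simpa [mul_comm] using T.toLinearMap.pi_apply_eq_sum_univ (I.restrict (Y · ω))
  obtain ⟨-, v, hlaw⟩ := hX.measurable_and_exists_map_eq_of_mem_span
    (Submodule.sum_mem _ fun (i : I) _ =>
      Submodule.smul_mem _ (T fun j => if i = j then 1 else 0) (hY i))
  exact ⟨0, v, by rw [Measure.map_map (by fun_prop) hmeas, hcomp, hlaw]⟩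

lemma IsCGF.isGaussianProcess (hX : IsCGF P X C) : IsGaussianProcess X P :=
  hX.isGaussianProcess_of_mem_span fun x => Submodule.subset_span ⟨x, rfl⟩

lemma IsCGF.memLp_two (hX : IsCGF P X C) (x : V d) : MemLp (X x) 2 P :=
  (hX.isGaussianProcess.hasGaussianLaw_eval x).memLp_two

lemma IsCGF.integrable (hX : IsCGF P X C) (x : V d) : Integrable (X x) P :=
  (hX.isGaussianProcess.hasGaussianLaw_eval x).integrable

lemma IsCGF.integral_eq_zero (hX : IsCGF P X C) (x : V d) : ∫ ω, X x ω ∂P = 0 :=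
  hX.integral_eq_zero_of_mem_span (Submodule.subset_span ⟨x, rfl⟩)

lemma IsCGF.variance_sum_mul (hX : IsCGF P X C) {Λ : Finset (V d)} {a : V d → ℝ}
    (hC : 0 ≤ ∑ x ∈ Λ, ∑ y ∈ Λ, a x * a y * C x y) :
    Var[fun ω => ∑ x ∈ Λ, a x * X x ω; P] = ∑ x ∈ Λ, ∑ y ∈ Λ, a x * a y * C x y := by
  have hmeas : Measurable fun ω => ∑ x ∈ Λ, a x * X x ω :=
    Finset.measurable_fun_sum _ fun x _ => (hX.1 x).const_mul _
  have hvar := variance_id_gaussianReal (μ := 0)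
    (v := (∑ x ∈ Λ, ∑ y ∈ Λ, a x * a y * C x y).toNNReal)
  rwa [← hX.2 Λ a, variance_map aemeasurable_id hmeas.aemeasurable, Real.coe_toNNReal _ hC] at hvar

/-- Polarization of the variances of `X x`, `X y` and `X x + X y`. -/
lemma IsCGF.covariance_eq (hX : IsCGF P X C) (hsymm : ∀ x y, C x y = C y x)
    (hC : ∀ (Λ : Finset (V d)) (a : V d → ℝ), 0 ≤ ∑ x ∈ Λ, ∑ y ∈ Λ, a x * a y * C x y)
    (x y : V d) : cov[X x, X y; P] = C x y := by
  have := hX.isGaussianProcess.isProbabilityMeasure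
  have hvar (x : V d) : Var[X x; P] = C x x := by simpa using hX.variance_sum_mul (hC {x} 1)
  rcases eq_or_ne x y with rfl | hxy
  · rw [covariance_self (hX.1 x).aemeasurable, hvar]
  have hpair := hX.variance_sum_mul (hC {x, y} 1)
  simp only [Finset.sum_pair hxy, Pi.one_apply, one_mul] at hpair
  rw [variance_fun_add (hX.memLp_two x) (hX.memLp_two y), hvar, hvar, hsymm y x] at hpair
  linarith

lemma IsTruncCoupling.covariance_eq [IsProbabilityMeasure P] (hd : 3 ≤ d)
    {φL : ℕ → V d → Ω → ℝ} (hcoup : IsTruncCoupling d P X φL) (x y : V d) :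
    cov[X x, X y; P] = lazyGreen d x y := by
  obtain ⟨htrunc, htail, hindep⟩ := hcoup 0
  set ξ : V d → Ω → ℝ := fun x ω => X x ω - φL 0 x ω with hξ
  have hsplit (x : V d) : X x = φL 0 x + ξ x := by
    funext ω
    simp [hξ]
  have hcross (x y : V d) : cov[φL 0 x, ξ y; P] = 0 :=
    (hindep.comp (measurable_pi_apply x) (measurable_pi_apply y)).covariance_eq_zero
      (htrunc.memLp_two x) (htail.memLp_two y)
  have hcov_trunc := htrunc.covariance_eq (fun x y => by simp only [covTrunc, lazyP_symm _ x y])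
    (fun Λ a => (isCompletelyPositiveOn_covTrunc (by lia) 0 Λ).quadraticForm_nonneg a) x y
  have hcov_tail := htail.covariance_eq (fun x y => by simp only [covTail, lazyP_symm _ x y])
    (quadraticForm_covTail_nonneg hd 0) x y
  have hmem := fun x => (htrunc.memLp_two x).add (htail.memLp_two x)
  rw [← covTrunc_add_covTail hd 0, ← hcov_trunc, ← hcov_tail, hsplit x, hsplit y,
    covariance_add_left (htrunc.memLp_two x) (htail.memLp_two x) (hmem y),
    covariance_add_right (htrunc.memLp_two x) (htrunc.memLp_two y) (htail.memLp_two y),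
    covariance_add_right (htail.memLp_two x) (htrunc.memLp_two y) (htail.memLp_two y),
    hcross, covariance_comm (ξ x), hcross, add_zero, zero_add]

end GaussianCovariance

section ConditionalHarmonicity

lemma sub_nnAvg_mem_span {Ω : Type*} {d : ℕ} (X : V d → Ω → ℝ) (x : V d) :
    (fun ω => X x ω - nnAvg (X · ω) x) ∈ Submodule.span ℝ (range X) := by
  have hX (z : V d) : X z ∈ Submodule.span ℝ (range X) := Submodule.subset_span ⟨z, rfl⟩
  have hsmul : (fun ω => X x ω - nnAvg (X · ω) x) =
      X x - (1 / (2 * d) : ℝ) • ∑ i : Fin d, (X (x + unitV d i) + X (x - unitV d i)) := by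
    funext ω
    simp [nnAvg]
  rw [hsmul]
  exact Submodule.sub_mem _ (hX x) (Submodule.smul_mem _ _
    (Submodule.sum_mem _ fun i _ => Submodule.add_mem _ (hX _) (hX _)))

variable {Ω : Type*} [MeasurableSpace Ω] {d : ℕ} {P : Measure Ω} {X : V d → Ω → ℝ}
  {C : V d → V d → ℝ}

/-- Given the values of `X` in a finite set `Λ`, the conditional mean of `X` is harmonic off `Λ`.
This is expressed through integrals over the events determined by `X` in `Λ`. -/
def IsConditionallyHarmonic (P : Measure Ω) (X : V d → Ω → ℝ) : Prop :=
  ∀ (Λ : Finset (V d)) (B : Set (Λ → ℝ)), MeasurableSet B → ∀ x ∉ Λ,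
    ∫ ω in restrictField Λ X ⁻¹' B, X x ω ∂P =
      nnAvg (fun z => ∫ ω in restrictField Λ X ⁻¹' B, X z ω ∂P) x

lemma integrable_nnAvg (hX : ∀ z, Integrable (X z) P) (x : V d) :
    Integrable (fun ω => nnAvg (X · ω) x) P :=
  .const_mul (integrable_finsetSum _ fun _ _ => (hX _).add (hX _)) _

lemma integral_nnAvg (hX : ∀ z, Integrable (X z) P) (x : V d) :
    ∫ ω, nnAvg (X · ω) x ∂P = nnAvg (fun z => ∫ ω, X z ω ∂P) x := by
  have hpair (z w : V d) : Integrable (fun ω => X z ω + X w ω) P := (hX z).add (hX w)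
  simp only [nnAvg]
  rw [integral_const_mul, integral_finsetSum _ fun i _ => hpair _ _]
  simp_rw [fun z w => integral_add (hX z) (hX w)]

lemma memLp_two_nnAvg (hX : ∀ z, MemLp (X z) 2 P) (x : V d) :
    MemLp (fun ω => nnAvg (X · ω) x) 2 P := by
  have hpair (z w : V d) : MemLp (fun ω => X z ω + X w ω) 2 P := (hX z).add (hX w)
  exact (memLp_finsetSum _ fun i _ => hpair _ _).const_mul _

lemma covariance_nnAvg_left [IsFiniteMeasure P] (hX : ∀ z, MemLp (X z) 2 P) {Y : Ω → ℝ}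
    (hY : MemLp Y 2 P) (x : V d) :
    cov[fun ω => nnAvg (X · ω) x, Y; P] = nnAvg (fun z => cov[X z, Y; P]) x := by
  have hpair (z w : V d) : MemLp (fun ω => X z ω + X w ω) 2 P := (hX z).add (hX w)
  have hadd (z w : V d) : cov[fun ω => X z ω + X w ω, Y; P] = cov[X z, Y; P] + cov[X w, Y; P] :=
    covariance_add_left (hX z) (hX w) hY
  simp only [nnAvg]
  rw [covariance_const_mul_left, covariance_fun_sum_left (fun i => hpair _ _) hY]
  simp_rw [hadd]

lemma IsCGF.indepFun_restrictField_sub_nnAvg (hd : 3 ≤ d) (hX : IsCGF P X C)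
    (hcov : ∀ x y, cov[X x, X y; P] = lazyGreen d x y) {Λ : Finset (V d)} {x : V d} (hx : x ∉ Λ) :
    IndepFun (restrictField Λ X) (fun ω => X x ω - nnAvg (X · ω) x) P := by
  have := hX.isGaussianProcess.isProbabilityMeasure
  set η : Ω → ℝ := fun ω => X x ω - nnAvg (X · ω) x
  have hη := sub_nnAvg_mem_span X x
  have horth (z : Λ) : cov[X z, η; P] = 0 := by
    have hxz : x ≠ z := fun h => hx (h ▸ z.2)
    rw [covariance_comm, covariance_fun_sub_left (hX.memLp_two x)
      (memLp_two_nnAvg hX.memLp_two x) (hX.memLp_two z),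
      covariance_nnAvg_left hX.memLp_two (hX.memLp_two z)]
    simp_rw [hcov, lazyGreen_sub_nnAvg hd, if_neg hxz]
  have hjoint : IsGaussianProcess (Sum.elim (fun z : Λ => X z) fun _ : Unit => η) P :=
    hX.isGaussianProcess_of_mem_span <| by
      rintro (z | _)
      exacts [Submodule.subset_span ⟨z, rfl⟩, hη]
  exact (hjoint.indepFun_of_covariance_eq_zero (fun z => (hX.1 z).aemeasurable)
    (fun _ => (hX.measurable_and_exists_map_eq_of_mem_span hη).1.aemeasurable)
    fun z _ => horth z).comp measurable_id (measurable_pi_apply ())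

lemma IsCGF.isConditionallyHarmonic (hd : 3 ≤ d) (hX : IsCGF P X C)
    (hcov : ∀ x y, cov[X x, X y; P] = lazyGreen d x y) : IsConditionallyHarmonic P X := by
  intro Λ B hB x hx
  have hη := sub_nnAvg_mem_span X x
  have hη_meas := (hX.measurable_and_exists_map_eq_of_mem_span hη).1
  have hzero : ∫ ω in restrictField Λ X ⁻¹' B, (X x ω - nnAvg (X · ω) x) ∂P = 0 := by
    have hmul := Indep.setIntegral_eq_mul (f := id) (measurable_restrictField hX.1).comap_le
      (hX.indepFun_restrictField_sub_nnAvg hd hcov hx) hη_meas.aemeasurable ⟨B, hB, rfl⟩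
      measurable_id.aestronglyMeasurable
    rw [hX.integral_eq_zero_of_mem_span (Y := fun ω => id _) hη, mul_zero] at hmul
    exact hmul
  have hint := fun z => (hX.integrable z).restrict (s := restrictField Λ X ⁻¹' B)
  rwa [integral_sub (hint x) (integrable_nnAvg hint x), integral_nnAvg hint, sub_eq_zero] at hzero

end ConditionalHarmonicity

/-! ### Exploring the clusters of a boundary -/

section Exploration

variable {d : ℕ} {Λ u : Finset (V d)} {D s s' T : Set (V d)} {x y : V d}

/-- The union of the clusters of `s` that meet `D`. -/
def cluster (D s : Set (V d)) : Set (V d) := {z | ConnIn s D {z}}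

open Classical in
/-- The sites of `Λ` that an exploration of the clusters of `D` in `s` leaves unvisited: those
outside `D` which neither belong to `cluster D s` nor are adjacent to it. -/
def unexplored (Λ : Finset (V d)) (D s : Set (V d)) : Finset (V d) :=
  {z ∈ Λ | z ∉ D ∧ z ∉ cluster D s ∧ ∀ w, adj z w → w ∉ cluster D s}

lemma mem_unexplored :
    x ∈ unexplored Λ D s ↔
      x ∈ Λ ∧ x ∉ D ∧ x ∉ cluster D s ∧ ∀ w, adj x w → w ∉ cluster D s := by
  simp [unexplored]

lemma mem_cluster_iff : x ∈ cluster D s ↔ ∃ a ∈ D, ConnIn s {a} {x} := by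
  rw [cluster, mem_ofPred_eq, connIn_iff_exists_singleton]
  simp

lemma mem_cluster_of_mem (hD : x ∈ D) (hs : x ∈ s) : x ∈ cluster D s :=
  mem_cluster_iff.2 ⟨x, hD, connIn_refl hs⟩

lemma mem_cluster_of_adj (hx : x ∈ cluster D s) (hy : y ∈ s) (h : adj x y) : y ∈ cluster D s := by
  obtain ⟨a, ha, hax⟩ := mem_cluster_iff.1 hx
  exact mem_cluster_iff.2 ⟨a, ha, hax.tail hy h⟩

lemma cluster_subset (hseed : ∀ x ∈ D, x ∈ s → x ∈ T)
    (hstep : ∀ x ∈ cluster D s, x ∈ T → ∀ y ∈ s, adj x y → y ∈ T) : cluster D s ⊆ T := by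
  intro x hx
  obtain ⟨a, ha, hax⟩ := mem_cluster_iff.1 hx
  obtain ⟨has, hreach⟩ := connIn_iff_reflTransGen.1 hax
  suffices x ∈ cluster D s ∧ x ∈ T from this.2
  clear hx hax
  induction hreach with
  | refl => exact ⟨mem_cluster_of_mem ha has, hseed a ha has⟩
  | tail _ hbc ih =>
    exact ⟨mem_cluster_of_adj ih.1 hbc.2 hbc.1, hstep _ ih.1 ih.2 _ hbc.2 hbc.1⟩

lemma cluster_eq_of_agree (h : ∀ z ∉ unexplored Λ D s, z ∈ s ↔ z ∈ s') :
    cluster D s = cluster D s' := by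
  have hD {z : V d} (hz : z ∈ D) : z ∉ unexplored Λ D s := fun hu => (mem_unexplored.1 hu).2.1 hz
  refine Subset.antisymm
    (cluster_subset (fun z hzD hzs => mem_cluster_of_mem hzD ((h z (hD hzD)).1 hzs))
      fun z hz hz' y hy hzy => mem_cluster_of_adj hz' ((h y ?_).1 hy) hzy)
    (cluster_subset (fun z hzD hzs => mem_cluster_of_mem hzD ((h z (hD hzD)).2 hzs))
      fun z _ hz' y hy hzy => mem_cluster_of_adj hz' ((h y ?_).2 hy) hzy)
  · exact fun hu => (mem_unexplored.1 hu).2.2.1 (mem_cluster_of_adj hz hy hzy)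
  · exact fun hu => (mem_unexplored.1 hu).2.2.2 z (adj_symm hzy) hz'

lemma unexplored_eq_of_agree (h : ∀ z ∉ unexplored Λ D s, z ∈ s ↔ z ∈ s') :
    unexplored Λ D s = unexplored Λ D s' := by
  ext z
  rw [mem_unexplored, mem_unexplored, cluster_eq_of_agree h]

/-- The exploration stops before looking at the unexplored sites. -/
lemma unexplored_sdiff_eq_iff : unexplored Λ D (s \ u) = u ↔ unexplored Λ D s = u := by
  have hagree (z : V d) (hz : z ∉ u) : z ∈ s ↔ z ∈ s \ u := by simp [hz]
  constructor <;> intro h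
  · exact (unexplored_eq_of_agree (h.symm ▸ fun z hz => (hagree z hz).symm)).symm.trans h
  · exact (unexplored_eq_of_agree (h.symm ▸ hagree)).symm.trans h

lemma notMem_of_notMem_unexplored (hΛ : x ∈ Λ) (hcluster : x ∉ cluster D s)
    (hx : x ∉ unexplored Λ D s) : x ∉ s :=
  fun hs => hx <| mem_unexplored.2 ⟨hΛ, fun hD => hcluster (mem_cluster_of_mem hD hs), hcluster,
    fun _ hw hwc => hcluster (mem_cluster_of_adj hwc hs (adj_symm hw))⟩

end Exploration

section MaximumPrinciple

variable {d : ℕ} {m : V d → ℝ} {M : ℝ}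

lemma nnAvg_lt {x : V d} (hle : ∀ w, adj x w → m w ≤ M) {i : Fin d} (hi : m (x + unitV d i) < M) :
    nnAvg m x < M := by
  have hd : (0 : ℝ) < d := by exact_mod_cast i.pos
  have hsum : ∑ j : Fin d, (m (x + unitV d j) + m (x - unitV d j)) < ∑ _j : Fin d, (M + M) :=
    Finset.sum_lt_sum
      (fun j _ => add_le_add (hle _ (adj_add_unitV x j)) (hle _ (adj_sub_unitV x j)))
      ⟨i, Finset.mem_univ i, add_lt_add_of_lt_of_le hi (hle _ (adj_sub_unitV x i))⟩
  rw [Finset.sum_const, Finset.card_fin, nsmul_eq_mul] at hsum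
  rw [nnAvg, one_div, inv_mul_lt_iff₀ (by positivity)]
  linarith

/-- Among the maximizers, the one furthest in a coordinate direction has a strictly smaller
neighbour. -/
lemma le_of_eq_nnAvg (hd : 0 < d) {u : Finset (V d)} (hharm : ∀ x ∈ u, m x = nnAvg m x)
    (hbdry : ∀ x ∈ u, ∀ w ∉ u, adj x w → m w ≤ M) : ∀ x ∈ u, m x ≤ M := by
  by_contra! hcon
  obtain ⟨x₀, hx₀, hM₀⟩ := hcon
  obtain ⟨x₁, hx₁, hmax⟩ := u.exists_max_image m ⟨x₀, hx₀⟩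
  have hM : M < m x₁ := hM₀.trans_le (hmax x₀ hx₀)
  let i : Fin d := ⟨0, hd⟩
  obtain ⟨x, hx, hfurthest⟩ := (u.filter (m · = m x₁)).exists_max_image (fun x => x i)
    ⟨x₁, by simp [hx₁]⟩
  obtain ⟨hxu, hxmax⟩ := Finset.mem_filter.1 hx
  have hle (w : V d) (hw : adj x w) : m w ≤ m x₁ := by
    by_cases hwu : w ∈ u
    · exact hmax w hwu
    · exact (hbdry x hxu w hwu hw).trans hM.le
  have hlt : m (x + unitV d i) < m x₁ := by
    refine (hle _ (adj_add_unitV x i)).lt_of_ne fun heq => ?_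
    by_cases hmem : x + unitV d i ∈ u
    · have := hfurthest _ (Finset.mem_filter.2 ⟨hmem, heq⟩)
      simp [unitV] at this
    · exact (hbdry x hxu _ hmem (adj_add_unitV x i)).not_gt (heq ▸ hM)
  exact (nnAvg_lt hle hlt).ne (by rw [← hharm x hxu, hxmax])

end MaximumPrinciple

section CrossingLowerBound

lemma crossEvent_anti {Ω : Type*} {d : ℕ} (X : V d → Ω → ℝ) {h h' : ℝ} (hh : h ≤ h') (R : ℕ) :
    crossEvent X h' R ⊆ crossEvent X h R :=
  fun _ hω => ConnIn.mono hω fun _ hz => hh.trans hz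

variable {Ω : Type*} [MeasurableSpace Ω] {P : Measure Ω} [IsProbabilityMeasure P] {A : Set Ω}

lemma setIntegral_le_mul_measureReal {f : Ω → ℝ} (hf : Integrable f P) (hA : MeasurableSet A)
    {c : ℝ} (h : ∀ ω ∈ A, f ω ≤ c) : ∫ ω in A, f ω ∂P ≤ c * P.real A := by
  have := setIntegral_mono_on hf.integrableOn (integrable_const c).integrableOn hA h
  simpa [mul_comm] using this

/-- Integrate `f ≤ t / 2 + f ^ 2 / (2 * t)`. -/
lemma setIntegral_le_add_integral_sq {f : Ω → ℝ} (hf : MemLp f 2 P) (hA : MeasurableSet A)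
    {t : ℝ} (ht : 0 < t) :
    ∫ ω in A, f ω ∂P ≤ t / 2 * P.real A + (∫ ω, f ω ^ 2 ∂P) / (2 * t) := by
  have hsq : Integrable (fun ω => f ω ^ 2 / (2 * t)) P := hf.integrable_sq.div_const _
  have hle : ∫ ω in A, (f ω - f ω ^ 2 / (2 * t)) ∂P ≤ t / 2 * P.real A := by
    refine setIntegral_le_mul_measureReal (f := fun ω => f ω - f ω ^ 2 / (2 * t))
      ((hf.integrable one_le_two).sub hsq) hA fun ω _ => ?_
    have hsquare : t / 2 - (f ω - f ω ^ 2 / (2 * t)) = (f ω - t) ^ 2 / (2 * t) := by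
      field_simp
      ring
    exact sub_nonneg.1 (hsquare ▸ by positivity)
  have hsq_le : ∫ ω in A, f ω ^ 2 / (2 * t) ∂P ≤ (∫ ω, f ω ^ 2 ∂P) / (2 * t) :=
    (setIntegral_le_integral hsq (.of_forall fun ω => by positivity)).trans_eq (integral_div _ _)
  rw [integral_sub (hf.integrable one_le_two).integrableOn hsq.integrableOn] at hle
  linarith

variable {d : ℕ} {X : V d → Ω → ℝ} {Λ : Finset (V d)} {D : Set (V d)}

/-- The event that exactly `u` is left unexplored depends only on `X` off `u`, so that `X` is
harmonic in `u` under it, while `X < h` on the boundary of `u`. -/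
lemma IsConditionallyHarmonic.setIntegral_unexplored_le (hd : 0 < d)
    (hharm : IsConditionallyHarmonic P X) (hmeas : ∀ x, Measurable (X x))
    (hint : ∀ x, Integrable (X x) P) (hΛ : ∀ x ∈ Λ, x ∉ D → ∀ w, adj x w → w ∈ Λ) (h : ℝ)
    {u : Finset (V d)} {x : V d} (hx : x ∈ u) :
    ∫ ω in {ω | unexplored Λ D (lvl X h ω ∩ Λ) = u}, X x ω ∂P ≤
      h * P.real {ω | unexplored Λ D (lvl X h ω ∩ Λ) = u} := by
  classical
  set A := {ω | unexplored Λ D (lvl X h ω ∩ Λ) = u}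
  have hA_preimage : A = restrictField (Λ \ u) X ⁻¹' {f | unexplored Λ D (finsetLvl h f) = u} := by
    ext ω
    rw [mem_preimage, mem_ofPred_eq (p := fun f => unexplored Λ D (finsetLvl h f) = u),
      finsetLvl_restrictField, Finset.coe_sdiff, ← inter_sdiff_assoc]
    exact unexplored_sdiff_eq_iff.symm
  refine le_of_eq_nnAvg (m := fun x => ∫ ω in A, X x ω ∂P) hd (fun z hz => ?_)
    (fun z hz w hw hzw => ?_) x hx
  · rw [hA_preimage]
    exact hharm (Λ \ u) _ (measurableSet_finsetLvl h fun s => unexplored Λ D s = u) z (by simp [hz])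
  · refine setIntegral_le_mul_measureReal (hint w)
      (measurableSet_lvl_inter hmeas Λ h fun s => unexplored Λ D s = u) fun ω hω => ?_
    rw [← show unexplored Λ D (lvl X h ω ∩ Λ) = u from hω] at hz hw
    obtain ⟨hzΛ, hzD, -, hz_nbr⟩ := mem_unexplored.1 hz
    have hwΛ := hΛ z hzΛ hzD w hzw
    have hw_closed := notMem_of_notMem_unexplored hwΛ (hz_nbr w hzw) hw
    exact le_of_not_ge fun hle => hw_closed ⟨hle, hwΛ⟩

lemma IsConditionallyHarmonic.setIntegral_notMem_cluster_le (hd : 0 < d)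
    (hharm : IsConditionallyHarmonic P X) (hmeas : ∀ x, Measurable (X x))
    (hint : ∀ x, Integrable (X x) P) (hΛ : ∀ x ∈ Λ, x ∉ D → ∀ w, adj x w → w ∈ Λ) (h : ℝ)
    {x : V d} (hx : x ∈ Λ) :
    ∫ ω in {ω | x ∉ cluster D (lvl X h ω ∩ Λ)}, X x ω ∂P ≤
      h * P.real {ω | x ∉ cluster D (lvl X h ω ∩ Λ)} := by
  set E := {ω | x ∉ cluster D (lvl X h ω ∩ Λ)}
  let A (u : Finset (V d)) : Set Ω := {ω | unexplored Λ D (lvl X h ω ∩ Λ) = u}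
  have hmeasAE (u : Finset (V d)) : MeasurableSet (A u ∩ E) :=
    measurableSet_lvl_inter hmeas Λ h fun s => unexplored Λ D s = u ∧ x ∉ cluster D s
  have hunion : E = ⋃ u ∈ Λ.powerset, A u ∩ E := by
    ext ω
    simp only [mem_iUnion, Finset.mem_powerset, exists_prop]
    exact ⟨fun hω => ⟨_, fun z hz => (mem_unexplored.1 hz).1, rfl, hω⟩, fun ⟨_, _, _, hω⟩ => hω⟩
  have hdisj : (Λ.powerset : Set (Finset (V d))).PairwiseDisjoint fun u => A u ∩ E :=
    fun u _ v _ huv => disjoint_left.2 fun ω hu hv => huv (hu.1.symm.trans hv.1)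
  have hle (u : Finset (V d)) : ∫ ω in A u ∩ E, X x ω ∂P ≤ h * P.real (A u ∩ E) := by
    by_cases hxu : x ∈ u
    · have hAE : A u ⊆ E := fun ω hω =>
        (mem_unexplored.1 (show x ∈ unexplored Λ D (lvl X h ω ∩ Λ) from hω ▸ hxu)).2.2.1
      rw [inter_eq_left.2 hAE]
      exact hharm.setIntegral_unexplored_le hd hmeas hint hΛ h hxu
    · refine setIntegral_le_mul_measureReal (hint x) (hmeasAE u) fun ω ⟨hωA, hωE⟩ => ?_
      have hclosed := notMem_of_notMem_unexplored hx hωE (hωA ▸ hxu)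
      exact le_of_not_ge fun hle => hclosed ⟨hle, hx⟩
  rw [hunion, integral_biUnion_finset _ (fun u _ => hmeasAE u) hdisj
    fun u _ => (hint x).integrableOn, measureReal_biUnion_finset hdisj fun u _ => hmeasAE u,
    Finset.mul_sum]
  exact Finset.sum_le_sum fun u _ => hle u

/-- Split `∫ X x = 0` according to `x ∈ cluster D _`, and choose `t = ∫ (X x) ^ 2 + 1` in
`setIntegral_le_add_integral_sq`. -/
lemma IsConditionallyHarmonic.le_measureReal_mem_cluster (hd : 0 < d)
    (hharm : IsConditionallyHarmonic P X) (hmeas : ∀ x, Measurable (X x))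
    (hL2 : ∀ x, MemLp (X x) 2 P) (hΛ : ∀ x ∈ Λ, x ∉ D → ∀ w, adj x w → w ∈ Λ)
    {x : V d} (hx : x ∈ Λ) (hmean : ∫ ω, X x ω ∂P = 0) :
    1 / ((∫ ω, X x ω ^ 2 ∂P) + 3) ≤ P.real {ω | x ∈ cluster D (lvl X (-1) ω ∩ Λ)} := by
  have hint (z : V d) : Integrable (X z) P := (hL2 z).integrable one_le_two
  set E := {ω | x ∈ cluster D (lvl X (-1) ω ∩ Λ)}
  set G := ∫ ω, X x ω ^ 2 ∂P
  have hE : MeasurableSet E := measurableSet_lvl_inter hmeas Λ (-1) fun s => x ∈ cluster D s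
  have hG : 0 ≤ G := integral_nonneg fun ω => sq_nonneg _
  have hmean_split := integral_add_compl hE (hint x)
  have hE_le : ∫ ω in E, X x ω ∂P ≤ (G + 1) / 2 * P.real E + G / (2 * (G + 1)) :=
    setIntegral_le_add_integral_sq (hL2 x) hE (by linarith)
  have hcompl_le : ∫ ω in Eᶜ, X x ω ∂P ≤ -1 * P.real Eᶜ :=
    hharm.setIntegral_notMem_cluster_le hd hmeas hint hΛ (-1) hx
  have hratio : G / (2 * (G + 1)) ≤ 1 / 2 := by
    rw [div_le_div_iff₀ (by linarith) (by norm_num)]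
    linarith
  rw [probReal_compl_eq_one_sub hE] at hcompl_le
  rw [div_le_iff₀ (by linarith)]
  linarith

lemma IsConditionallyHarmonic.le_measure_crossEvent (hd : 0 < d)
    (hharm : IsConditionallyHarmonic P X) (hmeas : ∀ x, Measurable (X x))
    (hL2 : ∀ x, MemLp (X x) 2 P) (hmean : ∫ ω, X 0 ω ∂P = 0) (R : ℕ) :
    ENNReal.ofReal (1 / ((∫ ω, X 0 ω ^ 2 ∂P) + 3)) ≤ P (crossEvent X (-1) R) := by
  let Λ := (finite_boxI (0 : V d) (2 * R)).toFinset
  have hmemΛ (z : V d) : z ∈ Λ ↔ z ∈ box d (2 * (R : ℝ)) := by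
    rw [Set.Finite.mem_toFinset, ← mem_box_natCast, Nat.cast_mul, Nat.cast_ofNat]
  have hΛ : ∀ z ∈ Λ, z ∉ bdry d (2 * (R : ℝ)) → ∀ w, adj z w → w ∈ Λ := by
    intro z hz hzD w hzw
    rw [hmemΛ] at hz ⊢
    by_contra hw
    exact hzD ⟨hz, w, hw, hzw⟩
  have hzero : (0 : V d) ∈ Λ := by simp [Λ, boxI]
  refine (ENNReal.ofReal_le_ofReal (hharm.le_measureReal_mem_cluster hd hmeas hL2 hΛ hzero
    hmean)).trans ?_
  rw [ofReal_measureReal]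
  refine measure_mono fun ω hω => ?_
  obtain ⟨a, ha, hconn⟩ := mem_cluster_iff.1 hω
  exact connIn_iff_exists_singleton.2 ⟨0, mem_box_natCast.2 fun _ => by simp, a, ha,
    hconn.symm.mono inter_subset_left⟩

lemma hStarStar_eq (d : ℕ) (P : Measure Ω) (X : V d → Ω → ℝ) :
    hStarStar d P X = sInf {h | (⨅ R : ℕ, P (crossEvent X h (R + 1))) = 0} := by
  simp only [hStarStar, crossEvent, Nat.cast_add_one]

lemma IsConditionallyHarmonic.bddBelow_iInf_measure_crossEvent_eq_zero (hd : 0 < d)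
    (hharm : IsConditionallyHarmonic P X) (hmeas : ∀ x, Measurable (X x))
    (hL2 : ∀ x, MemLp (X x) 2 P) (hmean : ∫ ω, X 0 ω ∂P = 0) :
    BddBelow {h | (⨅ R : ℕ, P (crossEvent X h (R + 1))) = 0} := by
  refine ⟨-1, fun h hh => ?_⟩
  by_contra! hlt
  have hle : ENNReal.ofReal (1 / ((∫ ω, X 0 ω ^ 2 ∂P) + 3)) ≤ 0 := hh ▸ le_iInf fun R =>
    (hharm.le_measure_crossEvent hd hmeas hL2 hmean (R + 1)).trans
      (measure_mono (crossEvent_anti X hlt.le _))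
  have : 0 ≤ ∫ ω, X 0 ω ^ 2 ∂P := integral_nonneg fun ω => sq_nonneg _
  exact (ENNReal.ofReal_pos.2 (by positivity)).not_ge hle

/-- `sInf` would be `0` on a set unbounded below, whence the lower bound on the defining set. -/
lemma IsConditionallyHarmonic.exists_le_measure_crossEvent (hd : 0 < d)
    (hharm : IsConditionallyHarmonic P X) (hmeas : ∀ x, Measurable (X x))
    (hL2 : ∀ x, MemLp (X x) 2 P) (hmean : ∫ ω, X 0 ω ∂P = 0) {h : ℝ} (hh : h < hStarStar d P X) :
    ∃ c > 0, ∀ R, 1 ≤ R → ENNReal.ofReal c ≤ P (crossEvent X h R) := by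
  rw [hStarStar_eq] at hh
  have hnotMem := notMem_of_lt_csInf hh
    (hharm.bddBelow_iInf_measure_crossEvent_eq_zero hd hmeas hL2 hmean)
  have htop : (⨅ R : ℕ, P (crossEvent X h (R + 1))) ≠ ⊤ :=
    ne_top_of_le_ne_top (measure_ne_top P _) (iInf_le _ 0)
  refine ⟨_, ENNReal.toReal_pos hnotMem htop, fun R hR => ?_⟩
  obtain ⟨R, rfl⟩ := Nat.exists_eq_add_of_le' hR
  rw [ENNReal.ofReal_toReal htop]
  exact iInf_le _ R

end CrossingLowerBound

/-- Lemma 3.3: polynomial lower bound for two-point connection probabilities of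
`{φ^L ≥ h}` in `B_{2L}`, for `h < h_{**}`. -/
theorem two_point_lower_bound (d : ℕ) (hd : 3 ≤ d) {Ω : Type*} [MeasurableSpace Ω]
    (P : Measure Ω) [IsProbabilityMeasure P] (φ : V d → Ω → ℝ) (φL : ℕ → V d → Ω → ℝ)
    (hφ : IsGFF P φ) (hcoup : IsTruncCoupling d P φ φL) :
    ∃ C₁ : ℝ, 0 < C₁ ∧
      ∀ h : ℝ, h < hStarStar d P φ →
        ∃ c : ℝ, 0 < c ∧
          ∀ L : ℕ, 1 ≤ L → ∀ x ∈ boxI (0 : V d) L, ∀ y ∈ boxI (0 : V d) L,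
            ENNReal.ofReal (c * (L : ℝ) ^ (-C₁)) ≤
              P {ω | ConnIn ({z | h ≤ φL L z ω} ∩ boxI (0 : V d) (2 * L)) {x} {y}} := by
  have hharm : IsConditionallyHarmonic P φ :=
    IsCGF.isConditionallyHarmonic hd hφ (hcoup.covariance_eq hd)
  refine ⟨2 * d * (3 * d + 1), by positivity, fun h hh => ?_⟩
  obtain ⟨h', hhh', hh'⟩ := exists_between hh
  obtain ⟨c₀, hc₀, hcross⟩ := hharm.exists_le_measure_crossEvent (by lia) hφ.1
    (IsCGF.memLp_two hφ) (IsCGF.integral_eq_zero hφ 0) hh'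
  exact hcoup.exists_two_point_bound hd hhh' hc₀ hcross

end
end GFFperc
end

section
/- Let Γ ≥ 1 and c₁ > 0 satisfy (1/4)c₁Γ³ ≤ 1/2 and c₁Γ ≤ 1/2, and let (q_n)_{n≥0} be nonnegative real numbers with q₀ ≤ (1/2)Γc₁ and q_n ≤ (1/4)Γ²q_{n−1}² + (1/2)Γc₁·2^{−2^n} for every n ≥ 1. Then q_n ≤ c₁Γ·2^{−2^n} ≤ (1/2)·2^{−2^n} for every n ≥ 1. -/
/-!
The sequence `C * x ^ 2 ^ n` turns the recursion `u (n + 1) = a * u n ^ 2 + b * x ^ 2 ^ (n + 1)`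
into the single inequality `a * C ^ 2 + b ≤ C`, because squaring `x ^ 2 ^ n` gives
`x ^ 2 ^ (n + 1)`. For `a = Γ² / 4`, `b = Γ c₁ / 2` and `C = c₁ Γ`, the bound `c₁ Γ³ / 4 ≤ 1 / 2`
says that the quadratic term uses at most half of `C`; the additive error uses the other half.
-/

theorem le_mul_pow_two_pow_of_quadratic_recursion {R : Type*} [CommSemiring R] [PartialOrder R]
    [IsOrderedRing R] {a b C x : R} {q : ℕ → R} (ha : 0 ≤ a) (hx : 0 ≤ x)
    (hC : a * C ^ 2 + b ≤ C) (hq : ∀ n, 0 ≤ q n) (hzero : q 0 ≤ C * x)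
    (hsucc : ∀ n, q (n + 1) ≤ a * q n ^ 2 + b * x ^ 2 ^ (n + 1)) (n : ℕ) :
    q n ≤ C * x ^ 2 ^ n := by
  induction n with
  | zero => simpa using hzero
  | succ n ih =>
    calc
      q (n + 1) ≤ a * q n ^ 2 + b * x ^ 2 ^ (n + 1) := hsucc n
      _ ≤ a * (C * x ^ 2 ^ n) ^ 2 + b * x ^ 2 ^ (n + 1) := by
        gcongr
        exact hq n
      _ = (a * C ^ 2 + b) * x ^ 2 ^ (n + 1) := by ring
      _ ≤ C * x ^ 2 ^ (n + 1) := by gcongr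

theorem renormalisation_induction_general {K : Type*} [Field K] [LinearOrder K]
    [IsStrictOrderedRing K] {Γ c₁ : K} (h1 : (1 / 4) * c₁ * Γ ^ 3 ≤ 1 / 2) (h2 : c₁ * Γ ≤ 1 / 2)
    {q : ℕ → K} (hq : ∀ n, 0 ≤ q n) (h0 : q 0 ≤ (1 / 2) * Γ * c₁)
    (hrec : ∀ n, q (n + 1) ≤
      (1 / 4) * Γ ^ 2 * q n ^ 2 + (1 / 2) * Γ * c₁ * ((1 : K) / 2) ^ 2 ^ (n + 1)) (n : ℕ) :
    q n ≤ c₁ * Γ * ((1 : K) / 2) ^ 2 ^ n ∧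
      c₁ * Γ * ((1 : K) / 2) ^ 2 ^ n ≤ (1 / 2) * ((1 : K) / 2) ^ 2 ^ n := by
  have hcΓ : 0 ≤ c₁ * Γ := by linarith [hq 0]
  have hquad : (1 / 4) * Γ ^ 2 * (c₁ * Γ) ^ 2 + (1 / 2) * Γ * c₁ ≤ c₁ * Γ := by
    calc
      (1 / 4) * Γ ^ 2 * (c₁ * Γ) ^ 2 + (1 / 2) * Γ * c₁
        = (1 / 4) * c₁ * Γ ^ 3 * (c₁ * Γ) + 1 / 2 * (c₁ * Γ) := by ring
      _ ≤ 1 / 2 * (c₁ * Γ) + 1 / 2 * (c₁ * Γ) := by gcongr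
      _ = c₁ * Γ := by ring
  have hzero : q 0 ≤ c₁ * Γ * (1 / 2) := by linarith
  exact ⟨le_mul_pow_two_pow_of_quadratic_recursion (by positivity) (by positivity) hquad hq hzero
    hrec n, by gcongr⟩

/-- The real-analytic induction underlying the renormalisation scheme: a nonnegative
sequence `(q_n)` satisfying a quadratic recursion with doubly-exponentially small additive
error decays doubly exponentially. -/
theorem renormalisation_induction (Γ c₁ : ℝ) (hΓ : 1 ≤ Γ) (hc₁ : 0 < c₁)
    (h1 : (1 / 4) * c₁ * Γ ^ 3 ≤ 1 / 2) (h2 : c₁ * Γ ≤ 1 / 2)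
    (q : ℕ → ℝ) (hq : ∀ n, 0 ≤ q n)
    (h0 : q 0 ≤ (1 / 2) * Γ * c₁)
    (hrec : ∀ n : ℕ, 1 ≤ n →
      q n ≤ (1 / 4) * Γ ^ 2 * q (n - 1) ^ 2 + (1 / 2) * Γ * c₁ * ((1 : ℝ) / 2) ^ 2 ^ n) :
    ∀ n : ℕ, 1 ≤ n →
      q n ≤ c₁ * Γ * ((1 : ℝ) / 2) ^ 2 ^ n ∧
        c₁ * Γ * ((1 : ℝ) / 2) ^ 2 ^ n ≤ (1 / 2) * ((1 : ℝ) / 2) ^ 2 ^ n :=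
  fun n _ ↦ renormalisation_induction_general h1 h2 hq h0 (fun k ↦ hrec (k + 1) k.succ_pos) n
end
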